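/- arXiv:2202.02324 — 11 statements merged into one kernel-verified Lean document; each statement's English description precedes it below -/
import Mathlib

section
/- Let α, β, γ ≥ 0 be real numbers with α + β > 1, 0 ≤ γ ≤ β, and γ < α + β − 1. Then the series ∑_{h=1}^∞ 1/(h^α (k+h)^β) converges for every integer k ≥ 1, and there exists a constant C > 0 such that for every integer k ≥ 1 one has ∑_{h=1}^∞ 1/(h^α (k+h)^β) ≤ C / k^γ. -/
/-! Since `0 ≤ γ ≤ β`, splitting `(k+h)^β = (k+h)^γ (k+h)^(β-γ) ≥ k^γ h^(β-γ)` bounds each term by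
`h^(-(α+β-γ)) / k^γ`. The exponent `α+β-γ` exceeds `1`, so comparison with the convergent
`p`-series gives both summability and the bound, with `C = ∑ h^(-(α+β-γ))`. -/

/-- For real numbers `α, β, γ ≥ 0` with `α + β > 1`, `γ ≤ β`, and
`γ < α + β − 1`, the series `∑_{h=1}^∞ 1/(h^α (k+h)^β)` converges for every integer
`k ≥ 1`, and there exists `C > 0` such that for every `k ≥ 1`,
`∑_{h=1}^∞ 1/(h^α (k+h)^β) ≤ C / k^γ`. -/
theorem stmt0 (α β γ : ℝ) (hα : 0 ≤ α) (hβ : 0 ≤ β) (hγ0 : 0 ≤ γ)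
    (hαβ : 1 < α + β) (hγβ : γ ≤ β) (hγ : γ < α + β - 1) :
    (∀ k : ℕ, 1 ≤ k →
      Summable (fun h : ℕ => 1 / (((h : ℝ) + 1) ^ α * ((k : ℝ) + ((h : ℝ) + 1)) ^ β))) ∧
    ∃ C : ℝ, 0 < C ∧ ∀ k : ℕ, 1 ≤ k →
      (∑' h : ℕ, 1 / (((h : ℝ) + 1) ^ α * ((k : ℝ) + ((h : ℝ) + 1)) ^ β))
        ≤ C / (k : ℝ) ^ γ := by
  have hs : Summable (fun h : ℕ => 1 / ((h : ℝ) + 1) ^ (α + β - γ)) := by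
    have := (summable_nat_add_iff 1).mpr
      (Real.summable_one_div_nat_rpow.mpr (show 1 < α + β - γ by linarith))
    simpa using this
  have hterm : ∀ k : ℕ, 1 ≤ k → ∀ h : ℕ,
      1 / (((h : ℝ) + 1) ^ α * ((k : ℝ) + ((h : ℝ) + 1)) ^ β)
        ≤ 1 / ((h : ℝ) + 1) ^ (α + β - γ) / (k : ℝ) ^ γ := by
    intro k hk h
    have hk0 : (0 : ℝ) < k := by exact_mod_cast hk
    have hh0 : (0 : ℝ) < (h : ℝ) + 1 := by positivity
    rw [div_div]
    apply one_div_le_one_div_of_le (by positivity)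
    calc ((h : ℝ) + 1) ^ (α + β - γ) * (k : ℝ) ^ γ
        = ((h : ℝ) + 1) ^ α * ((k : ℝ) ^ γ * ((h : ℝ) + 1) ^ (β - γ)) := by
          rw [show α + β - γ = α + (β - γ) by ring, Real.rpow_add hh0]; ring
      _ ≤ ((h : ℝ) + 1) ^ α * (((k : ℝ) + ((h : ℝ) + 1)) ^ γ
            * ((k : ℝ) + ((h : ℝ) + 1)) ^ (β - γ)) := by
          have h1 : (k : ℝ) ^ γ ≤ ((k : ℝ) + ((h : ℝ) + 1)) ^ γ :=
            Real.rpow_le_rpow hk0.le (by linarith) hγ0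
          have h2 : ((h : ℝ) + 1) ^ (β - γ) ≤ ((k : ℝ) + ((h : ℝ) + 1)) ^ (β - γ) :=
            Real.rpow_le_rpow hh0.le (by linarith) (by linarith)
          gcongr
      _ = ((h : ℝ) + 1) ^ α * ((k : ℝ) + ((h : ℝ) + 1)) ^ β := by
          rw [← Real.rpow_add (by positivity), add_sub_cancel]
  have hsum : ∀ k : ℕ, 1 ≤ k →
      Summable (fun h : ℕ => 1 / (((h : ℝ) + 1) ^ α * ((k : ℝ) + ((h : ℝ) + 1)) ^ β)) :=
    fun k hk => Summable.of_nonneg_of_le (fun h => by positivity) (hterm k hk)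
      (hs.div_const _)
  refine ⟨hsum, ∑' h : ℕ, 1 / ((h : ℝ) + 1) ^ (α + β - γ), ?_, fun k hk => ?_⟩
  · exact hs.tsum_pos (fun h => by positivity) 0 (by positivity)
  · rw [← tsum_div_const]
    exact (hsum k hk).tsum_le_tsum (hterm k hk) (hs.div_const _)
end

section
/- Fix real numbers s > 1/2 and r ∈ (0, 1/2]. Then there exists a constant C > 0 such that for every integer k ∈ ℤ one has (1+|k|)^{2r} · ∑_{h∈ℤ} 1/((1+|k−h|)^{2s} (1+|h|)^{2r}) ≤ C; in particular the series G_r(k) = ∑_{h∈ℤ} 1/((1+|k−h|)^{2s}(1+|h|)^{2r}) converges for every k and G_r(k) = O(1/|k|^{2r}) as |k| → ∞. -/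
/-!
Write `a = 1 + |k - h|`, `b = 1 + |h|`, `K = 1 + |k|`, `p = 2 s > 1` and `q = 2 r ∈ (0, 1]`.
The triangle inequality gives `K ≤ a + b ≤ 2 max(a, b)`, hence `K ^ q ≤ 2 max(a, b) ^ q`.
If `a ≤ b` this cancels `b ^ q` and leaves `2 / a ^ p`; if `b ≤ a` it leaves
`2 / (a ^ (p - q) * b ^ q) ≤ 2 / b ^ p`. So `K ^ q` times the summand is at most
`2 (1 / a ^ p + 1 / b ^ p)` (`weight_mul_term_le`). As `p > 1`, both parts are summable over
`h ∈ ℤ`, and by translation and reflection invariance their sums do not depend on `k`.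
-/

lemma weight_mul_term_le {K a b p q : ℝ} (hK : 0 ≤ K) (ha : 0 < a) (hb : 0 < b)
    (hKab : K ≤ a + b) (hq0 : 0 ≤ q) (hq1 : q ≤ 1) (hqp : q ≤ p) :
    K ^ q * (1 / (a ^ p * b ^ q)) ≤ 2 * (1 / a ^ p + 1 / b ^ p) := by
  have hap : 0 < a ^ p := Real.rpow_pos_of_pos ha p
  have hbp : 0 < b ^ p := Real.rpow_pos_of_pos hb p
  have hbq : 0 < b ^ q := Real.rpow_pos_of_pos hb q
  have haq : 0 < a ^ q := Real.rpow_pos_of_pos ha q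
  have two_rpow : (2 : ℝ) ^ q ≤ 2 := by
    simpa using Real.rpow_le_rpow_of_exponent_le (one_le_two (α := ℝ)) hq1
  have bound : ∀ m : ℝ, 0 < m → K ≤ 2 * m → K ^ q ≤ 2 * m ^ q := fun m hm hKm =>
    calc K ^ q ≤ (2 * m) ^ q := Real.rpow_le_rpow hK hKm hq0
      _ = 2 ^ q * m ^ q := Real.mul_rpow zero_le_two hm.le
      _ ≤ 2 * m ^ q := by gcongr
  have ha' : 0 < 1 / a ^ p := by positivity
  have hb' : 0 < 1 / b ^ p := by positivity
  rcases le_total a b with hab | hba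
  · calc K ^ q * (1 / (a ^ p * b ^ q)) ≤ 2 * b ^ q * (1 / (a ^ p * b ^ q)) := by
          gcongr
          exact bound b hb (by linarith)
      _ = 2 * (1 / a ^ p) := by field_simp
      _ ≤ _ := by linarith
  · have key : a ^ q * b ^ p ≤ a ^ p * b ^ q := by
      have h1 : a ^ p = a ^ (p - q) * a ^ q := by rw [← Real.rpow_add ha]; congr 1; ring
      have h2 : b ^ p = b ^ (p - q) * b ^ q := by rw [← Real.rpow_add hb]; congr 1; ring
      have h3 : b ^ (p - q) ≤ a ^ (p - q) := Real.rpow_le_rpow hb.le hba (by linarith)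
      calc a ^ q * b ^ p = b ^ (p - q) * (a ^ q * b ^ q) := by rw [h2]; ring
        _ ≤ a ^ (p - q) * (a ^ q * b ^ q) := by gcongr
        _ = a ^ p * b ^ q := by rw [h1]; ring
    calc K ^ q * (1 / (a ^ p * b ^ q)) ≤ 2 * a ^ q * (1 / (a ^ q * b ^ p)) := by
          gcongr
          exact bound a ha (by linarith)
      _ = 2 * (1 / b ^ p) := by field_simp
      _ ≤ _ := by linarith

lemma summable_one_div_one_add_abs_rpow {p : ℝ} (hp : 1 < p) :
    Summable (fun h : ℤ => 1 / ((1 + |h| : ℤ) : ℝ) ^ p) := by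
  have hnat : Summable (fun n : ℕ => 1 / ((n : ℝ) + 1) ^ p) := by
    simpa using (summable_nat_add_iff 1).2 (Real.summable_one_div_nat_rpow.2 hp)
  refine Summable.of_nat_of_neg ?_ ?_ <;>
  · refine hnat.congr fun n => ?_
    simp [add_comm]

/-- For `s > 1/2` and `r ∈ (0, 1/2]`, the series
`G_r(k) = ∑_{h∈ℤ} 1/((1+|k−h|)^{2s}(1+|h|)^{2r})` converges for every `k ∈ ℤ`, and
there exists `C > 0` with `(1+|k|)^{2r} · G_r(k) ≤ C` for all `k`; in particular
`G_r(k) = O(1/|k|^{2r})` as `|k| → ∞`. -/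
theorem stmt1 (s r : ℝ) (hs : 1 / 2 < s) (hr0 : 0 < r) (hr : r ≤ 1 / 2) :
    (∀ k : ℤ, Summable (fun h : ℤ =>
      1 / (((1 + |k - h| : ℤ) : ℝ) ^ (2 * s) * ((1 + |h| : ℤ) : ℝ) ^ (2 * r)))) ∧
    ∃ C : ℝ, 0 < C ∧ ∀ k : ℤ,
      ((1 + |k| : ℤ) : ℝ) ^ (2 * r) *
        (∑' h : ℤ, 1 / (((1 + |k - h| : ℤ) : ℝ) ^ (2 * s) * ((1 + |h| : ℤ) : ℝ) ^ (2 * r)))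
        ≤ C := by
  have hS := summable_one_div_one_add_abs_rpow (p := 2 * s) (by linarith)
  obtain ⟨g, hg⟩ : ∃ g : ℤ → ℝ, g = fun h => 1 / ((1 + |h| : ℤ) : ℝ) ^ (2 * s) := ⟨_, rfl⟩
  rw [← hg] at hS
  have hS' : ∀ k : ℤ, Summable (fun h : ℤ => g (k - h)) := fun k =>
    (Equiv.subLeft k).summable_iff.2 hS
  have hone : ∀ j : ℤ, (1 : ℝ) ≤ ((1 + |j| : ℤ) : ℝ) := fun j => by
    exact_mod_cast le_add_of_nonneg_right (abs_nonneg j)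
  have hpt : ∀ k h : ℤ, ((1 + |k| : ℤ) : ℝ) ^ (2 * r) *
      (1 / (((1 + |k - h| : ℤ) : ℝ) ^ (2 * s) * ((1 + |h| : ℤ) : ℝ) ^ (2 * r)))
        ≤ 2 * (g (k - h) + g h) := fun k h => by
    simp only [hg]
    refine weight_mul_term_le (by linarith [hone k]) (by linarith [hone (k - h)])
      (by linarith [hone h]) ?_ (by linarith) (by linarith) (by linarith)
    have : |k| ≤ |k - h| + |h| := by simpa using abs_add_le (k - h) h
    exact_mod_cast (by lia : 1 + |k| ≤ 1 + |k - h| + (1 + |h|))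
  have hmaj : ∀ k : ℤ, Summable (fun h : ℤ => 2 * (g (k - h) + g h)) := fun k =>
    ((hS' k).add hS).mul_left 2
  have hnn : ∀ k h : ℤ,
      0 ≤ 1 / (((1 + |k - h| : ℤ) : ℝ) ^ (2 * s) * ((1 + |h| : ℤ) : ℝ) ^ (2 * r)) :=
    fun k h => by
      have := hone h
      have := hone (k - h)
      positivity
  have hsum : ∀ k : ℤ, Summable (fun h : ℤ =>
      1 / (((1 + |k - h| : ℤ) : ℝ) ^ (2 * s) * ((1 + |h| : ℤ) : ℝ) ^ (2 * r))) := fun k => by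
    refine (hmaj k).of_nonneg_of_le (hnn k) fun h => le_trans ?_ (hpt k h)
    exact le_mul_of_one_le_left (hnn k h) (Real.one_le_rpow (hone k) (by linarith))
  have hg0 : 0 ≤ ∑' h, g h := tsum_nonneg fun h => by
    have := hone h
    simp only [hg]
    positivity
  -- `+ 1` only serves to make the constant visibly positive.
  refine ⟨hsum, 4 * (∑' h, g h) + 1, by linarith, fun k => ?_⟩
  have hshift : ∑' h, g (k - h) = ∑' h, g h := (Equiv.subLeft k).tsum_eq g
  rw [← tsum_mul_left]
  calc _ ≤ ∑' h, 2 * (g (k - h) + g h) :=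
        ((hsum k).mul_left _).tsum_le_tsum (hpt k) (hmaj k)
    _ = 4 * ∑' h, g h := by
        rw [tsum_mul_left, (hS' k).tsum_add hS, hshift]; ring
    _ ≤ _ := by linarith
end

section
/- Fix s > 1/2, r ∈ [−s, s], and n ∈ ℕ. Then there exists a constant c > 0 such that for all finitely supported sequences A : ℤ → Matrix (Fin n) (Fin n) ℂ and u : ℤ → (Fin n → ℂ), the discrete convolution (A·u)(k) := ∑_{h∈ℤ} A(k−h) u(h) satisfies ∑_{k∈ℤ} (1+|k|)^{2r} ‖(A·u)(k)‖² ≤ c² · (∑_{k∈ℤ} (1+|k|)^{2s} ‖A(k)‖²) · (∑_{h∈ℤ} (1+|h|)^{2r} ‖u(h)‖²). Equivalently, pointwise matrix–vector multiplication extends uniquely to a continuous bilinear map H^s(𝕋, Hom(ℝⁿ,ℝⁿ)) × H^r(𝕋, ℝⁿ) → H^r(𝕋, ℝⁿ) with ‖A·u‖_r ≤ c ‖A‖_s ‖u‖_r. -/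
/-!
Write `w k = 1 + |k|`, `α k = w k ^ s * ‖A k‖` and `β h = w h ^ r * ‖u h‖`. The claim is an
`ℓ²` bound for the sums `∑ h, K k h * α (k - h) * β h` with kernel
`K k h = w k ^ r * w (k - h) ^ (-s) * w h ^ (-r)`. Since `w` is subadditive and
`|r| ≤ s`, the kernel is at most
`2 ^ |r| * (w (k - h) ^ (-s) + w h ^ (-s) + w k ^ (-s))` (`kernel_bound`): the larger of the two
weights on the right of the triangle inequality absorbs the factor with exponent `|r|`.

Each of the three pieces is handled by Cauchy–Schwarz and the convergence of `∑ w k ^ (-2 s)`,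
which holds because `2 s > 1`. For the first two the kernel is square summable in `h`, uniformly
in `k` (`sum_sq_le_of_row`); for the third it depends on `k` alone and is square summable there
(`sum_sq_le_of_col`).
-/

open Matrix

attribute [local instance] Matrix.linftyOpNormedAddCommGroup

namespace SobolevMul

/-- The weight `1 + |k|`, in the form in which it occurs in the theorem. -/
noncomputable def w (k : ℤ) : ℝ := ((1 + |k| : ℤ) : ℝ)

lemma one_le_w (k : ℤ) : 1 ≤ w k := by
  unfold w; push_cast; linarith [abs_nonneg (k : ℝ)]

lemma w_pos (k : ℤ) : 0 < w k := lt_of_lt_of_le one_pos (one_le_w k)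

lemma w_add_le (a b : ℤ) : w (a + b) ≤ w a + w b := by
  unfold w; push_cast; linarith [abs_add_le (a : ℝ) b]

lemma w_neg (a : ℤ) : w (-a) = w a := by
  unfold w; simp

lemma summable_w {s : ℝ} (hs : 1 / 2 < s) : Summable fun k : ℤ => (w k ^ (-s)) ^ 2 := by
  have h := Real.summable_abs_int_rpow (b := 2 * s) (by linarith)
  refine Summable.of_norm_bounded_eventually h ?_
  have : ({0} : Set ℤ)ᶜ ∈ Filter.cofinite := (Set.finite_singleton 0).compl_mem_cofinite
  filter_upwards [this] with k hk
  have hk0 : k ≠ 0 := by simpa using hk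
  have hp : 0 < |(k : ℝ)| := by positivity
  rw [Real.norm_of_nonneg (by positivity), ← Real.rpow_natCast, ← Real.rpow_mul (w_pos k).le]
  have e : -s * ((2 : ℕ) : ℝ) = -(2 * s) := by push_cast; ring
  rw [e]
  refine Real.rpow_le_rpow_of_nonpos hp ?_ (by linarith)
  unfold w; push_cast; linarith

/-- The case `0 ≤ t` of the kernel estimate, for arbitrary weights: the larger of `y` and `z`
dominates `x / 2`, and the smaller one keeps the full exponent `-s` because `t ≤ s`. -/
lemma kernel_bound_aux {x y z s t : ℝ} (hx : 0 < x) (hy : 0 < y) (hz : 0 < z)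
    (h : x ≤ y + z) (ht : 0 ≤ t) (hts : t ≤ s) :
    x ^ t * y ^ (-s) * z ^ (-t) ≤ 2 ^ t * (y ^ (-s) + z ^ (-s)) := by
  have hys : 0 < y ^ (-s) := Real.rpow_pos_of_pos hy _
  have hzs : 0 < z ^ (-s) := Real.rpow_pos_of_pos hz _
  have hzt : 0 < z ^ (-t) := Real.rpow_pos_of_pos hz _
  have h2 : (0 : ℝ) < 2 ^ t := by positivity
  rcases le_total y z with hyz | hzy
  · have h1 : x ^ t ≤ 2 ^ t * z ^ t := by
      rw [← Real.mul_rpow (by norm_num) hz.le]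
      exact Real.rpow_le_rpow hx.le (by linarith) ht
    calc x ^ t * y ^ (-s) * z ^ (-t) ≤ 2 ^ t * z ^ t * y ^ (-s) * z ^ (-t) := by gcongr
      _ = 2 ^ t * y ^ (-s) * (z ^ t * z ^ (-t)) := by ring
      _ = 2 ^ t * y ^ (-s) := by rw [← Real.rpow_add hz]; simp
      _ ≤ _ := by gcongr; linarith
  · have h1 : x ^ t ≤ 2 ^ t * y ^ t := by
      rw [← Real.mul_rpow (by norm_num) hy.le]
      exact Real.rpow_le_rpow hx.le (by linarith) ht
    calc x ^ t * y ^ (-s) * z ^ (-t) ≤ 2 ^ t * y ^ t * y ^ (-s) * z ^ (-t) := by gcongr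
      _ = 2 ^ t * y ^ (t + -s) * z ^ (-t) := by rw [Real.rpow_add hy]; ring
      _ ≤ 2 ^ t * z ^ (t + -s) * z ^ (-t) := by
        gcongr 2 ^ t * ?_ * z ^ (-t)
        exact Real.rpow_le_rpow_of_nonpos hz hzy (by linarith)
      _ = 2 ^ t * z ^ (-s) := by rw [mul_assoc, ← Real.rpow_add hz]; congr 2; ring
      _ ≤ _ := by gcongr; linarith

lemma kernel_bound {s r : ℝ} (hr1 : -s ≤ r) (hr2 : r ≤ s) (k h : ℤ) :
    w k ^ r * w (k - h) ^ (-s) * w h ^ (-r) ≤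
      2 ^ |r| * (w (k - h) ^ (-s) + w h ^ (-s) + w k ^ (-s)) := by
  have h2 : (0 : ℝ) < 2 ^ |r| := by positivity
  have p1 : 0 < w h ^ (-s) := Real.rpow_pos_of_pos (w_pos h) _
  have p2 : 0 < w k ^ (-s) := Real.rpow_pos_of_pos (w_pos k) _
  rcases le_total 0 r with hr | hr
  · rw [abs_of_nonneg hr] at *
    have t : w k ≤ w (k - h) + w h := by simpa using w_add_le (k - h) h
    refine (kernel_bound_aux (w_pos k) (w_pos _) (w_pos h) t hr hr2).trans ?_
    exact mul_le_mul_of_nonneg_left (by linarith) h2.le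
  · rw [abs_of_nonpos hr] at *
    have t : w h ≤ w (k - h) + w k := by
      have := w_add_le (-(k - h)) k
      rw [w_neg] at this
      simpa using this
    have := kernel_bound_aux (w_pos h) (w_pos (k - h)) (w_pos k) t
      (neg_nonneg.2 hr) (by linarith : -r ≤ s)
    rw [neg_neg] at this
    calc _ = w h ^ (-r) * w (k - h) ^ (-s) * w k ^ r := by ring
      _ ≤ _ := this
      _ ≤ _ := by gcongr; linarith

/-- Finite sums of a nonnegative summable function along an injective map. -/
lemma sum_comp_le {f : ℤ → ℝ} (hf : Summable f) (h0 : ∀ k, 0 ≤ f k) (G : Finset ℤ)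
    {e : ℤ → ℤ} (he : Function.Injective e) : ∑ h ∈ G, f (e h) ≤ ∑' k, f k := by
  rw [← Finset.sum_image (f := f) (s := G) (g := e) (fun _ _ _ _ hh => he hh)]
  exact hf.sum_le_tsum _ (fun k _ => h0 k)

lemma sum_sq_le_of_row {α β : ℤ → ℝ} (hα : Summable fun k => α k ^ 2)
    (hβ : Summable fun k => β k ^ 2) (H G : Finset ℤ) (p : ℤ → ℤ → ℝ) {S : ℝ} (hS : 0 ≤ S)
    (hp : ∀ k, ∑ h ∈ G, p k h ^ 2 ≤ S) :
    ∑ k ∈ H, (∑ h ∈ G, p k h * (α (k - h) * β h)) ^ 2 ≤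
      S * ((∑' k, α k ^ 2) * ∑' h, β h ^ 2) := by
  calc ∑ k ∈ H, (∑ h ∈ G, p k h * (α (k - h) * β h)) ^ 2
      ≤ ∑ k ∈ H, S * ∑ h ∈ G, (α (k - h) * β h) ^ 2 := by
        refine Finset.sum_le_sum fun k _ => (Finset.sum_mul_sq_le_sq_mul_sq _ _ _).trans ?_
        exact mul_le_mul_of_nonneg_right (hp k) (Finset.sum_nonneg fun _ _ => sq_nonneg _)
    _ = S * ∑ h ∈ G, (∑ k ∈ H, α (k - h) ^ 2) * β h ^ 2 := by
        rw [← Finset.mul_sum, Finset.sum_comm]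
        simp only [mul_pow, Finset.sum_mul]
    _ ≤ S * ∑ h ∈ G, (∑' k, α k ^ 2) * β h ^ 2 := by
        gcongr with h _
        exact sum_comp_le hα (fun _ => sq_nonneg _) H (sub_left_injective (b := h))
    _ ≤ S * ((∑' k, α k ^ 2) * ∑' h, β h ^ 2) := by
        rw [← Finset.mul_sum]
        gcongr
        exact hβ.sum_le_tsum _ fun _ _ => sq_nonneg _

lemma sum_sq_le_of_col {α β : ℤ → ℝ} (hα : Summable fun k => α k ^ 2)
    (hβ : Summable fun k => β k ^ 2) (H G : Finset ℤ) (q : ℤ → ℝ) {S : ℝ}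
    (hq : ∑ k ∈ H, q k ^ 2 ≤ S) :
    ∑ k ∈ H, (∑ h ∈ G, q k * (α (k - h) * β h)) ^ 2 ≤
      S * ((∑' k, α k ^ 2) * ∑' h, β h ^ 2) := by
  have h0 : 0 ≤ ∑' k, α k ^ 2 := tsum_nonneg fun _ => sq_nonneg _
  have h1 : 0 ≤ ∑' k, β k ^ 2 := tsum_nonneg fun _ => sq_nonneg _
  calc ∑ k ∈ H, (∑ h ∈ G, q k * (α (k - h) * β h)) ^ 2
      ≤ ∑ k ∈ H, q k ^ 2 * ((∑' k, α k ^ 2) * ∑' h, β h ^ 2) := by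
        refine Finset.sum_le_sum fun k _ => ?_
        rw [← Finset.mul_sum, mul_pow]
        gcongr
        refine (Finset.sum_mul_sq_le_sq_mul_sq _ _ _).trans ?_
        gcongr
        · exact sum_comp_le hα (fun _ => sq_nonneg _) G (sub_right_injective (b := k))
        · exact hβ.sum_le_tsum _ fun _ _ => sq_nonneg _
    _ ≤ _ := by
        rw [← Finset.sum_mul]
        gcongr

lemma rpow_two_mul (k : ℤ) (t : ℝ) : w k ^ (2 * t) = (w k ^ t) ^ 2 := by
  rw [mul_comm, Real.rpow_mul (w_pos k).le]
  exact_mod_cast rfl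

/-- The scalar estimate, with the sums on the left restricted to finite sets. -/
lemma scalar_bound {s r : ℝ} (hs : 1 / 2 < s) (hr1 : -s ≤ r) (hr2 : r ≤ s) {a v : ℤ → ℝ}
    (ha0 : ∀ k, 0 ≤ a k) (hv0 : ∀ k, 0 ≤ v k)
    (ha : Summable fun k => (w k ^ s * a k) ^ 2) (hv : Summable fun k => (w k ^ r * v k) ^ 2)
    (H G : Finset ℤ) :
    ∑ k ∈ H, (w k ^ r * ∑ h ∈ G, a (k - h) * v h) ^ 2 ≤
      (9 * (2 ^ |r|) ^ 2 * ∑' k, (w k ^ (-s)) ^ 2) *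
        ((∑' k, (w k ^ s * a k) ^ 2) * ∑' k, (w k ^ r * v k) ^ 2) := by
  set α : ℤ → ℝ := fun k => w k ^ s * a k with hα
  set β : ℤ → ℝ := fun k => w k ^ r * v k with hβ
  have hα0 : ∀ k, 0 ≤ α k := fun k => mul_nonneg (Real.rpow_nonneg (w_pos k).le _) (ha0 k)
  have hβ0 : ∀ k, 0 ≤ β k := fun k => mul_nonneg (Real.rpow_nonneg (w_pos k).le _) (hv0 k)
  have hW := summable_w hs
  set S := ∑' k, (w k ^ (-s)) ^ 2 with hSdef
  have hS : 0 ≤ S := tsum_nonneg fun _ => sq_nonneg _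
  have B1 := sum_sq_le_of_row ha hv H G (fun k h => w (k - h) ^ (-s)) hS
    (fun k => sum_comp_le hW (fun _ => sq_nonneg _) G (sub_right_injective (b := k)))
  have B2 := sum_sq_le_of_row ha hv H G (fun _ h => w h ^ (-s)) hS
    (fun _ => hW.sum_le_tsum _ fun _ _ => sq_nonneg _)
  have B3 := sum_sq_le_of_col ha hv H G (fun k => w k ^ (-s))
    (hW.sum_le_tsum _ fun _ _ => sq_nonneg _)
  set P := (∑' k, α k ^ 2) * ∑' k, β k ^ 2
  have key : ∀ k ∈ H, (w k ^ r * ∑ h ∈ G, a (k - h) * v h) ^ 2 ≤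
      3 * (2 ^ |r|) ^ 2 * ((∑ h ∈ G, w (k - h) ^ (-s) * (α (k - h) * β h)) ^ 2 +
        (∑ h ∈ G, w h ^ (-s) * (α (k - h) * β h)) ^ 2 +
        (∑ h ∈ G, w k ^ (-s) * (α (k - h) * β h)) ^ 2) := by
    intro k _
    set X := ∑ h ∈ G, w (k - h) ^ (-s) * (α (k - h) * β h)
    set Y := ∑ h ∈ G, w h ^ (-s) * (α (k - h) * β h)
    set Z := ∑ h ∈ G, w k ^ (-s) * (α (k - h) * β h)
    have h1 : w k ^ r * ∑ h ∈ G, a (k - h) * v h ≤ 2 ^ |r| * (X + Y + Z) := by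
      rw [← Finset.sum_add_distrib, ← Finset.sum_add_distrib, Finset.mul_sum, Finset.mul_sum]
      refine Finset.sum_le_sum fun h _ => ?_
      have e1 : w (k - h) ^ (-s) * w (k - h) ^ s = 1 := by
        rw [← Real.rpow_add (w_pos _)]; simp
      have e2 : w h ^ (-r) * w h ^ r = 1 := by
        rw [← Real.rpow_add (w_pos _)]; simp
      calc w k ^ r * (a (k - h) * v h)
          = w k ^ r * (a (k - h) * v h) * (w (k - h) ^ (-s) * w (k - h) ^ s) *
            (w h ^ (-r) * w h ^ r) := by rw [e1, e2]; ring
        _ = (w k ^ r * w (k - h) ^ (-s) * w h ^ (-r)) * (α (k - h) * β h) := by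
            simp only [hα, hβ]; ring
        _ ≤ 2 ^ |r| * (w (k - h) ^ (-s) + w h ^ (-s) + w k ^ (-s)) * (α (k - h) * β h) :=
            mul_le_mul_of_nonneg_right (kernel_bound hr1 hr2 k h)
              (mul_nonneg (hα0 _) (hβ0 _))
        _ = _ := by ring
    have h0 : 0 ≤ w k ^ r * ∑ h ∈ G, a (k - h) * v h :=
      mul_nonneg (Real.rpow_nonneg (w_pos k).le _)
        (Finset.sum_nonneg fun h _ => mul_nonneg (ha0 _) (hv0 _))
    calc _ ≤ (2 ^ |r| * (X + Y + Z)) ^ 2 := pow_le_pow_left₀ h0 h1 2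
      _ = (2 ^ |r|) ^ 2 * (X + Y + Z) ^ 2 := by ring
      _ ≤ (2 ^ |r|) ^ 2 * (3 * (X ^ 2 + Y ^ 2 + Z ^ 2)) := by
          gcongr
          nlinarith [sq_nonneg (X - Y), sq_nonneg (Y - Z), sq_nonneg (X - Z)]
      _ = _ := by ring
  refine (Finset.sum_le_sum key).trans ?_
  rw [← Finset.mul_sum, Finset.sum_add_distrib, Finset.sum_add_distrib]
  calc _ ≤ 3 * (2 ^ |r|) ^ 2 * (S * P + S * P + S * P) := by gcongr
    _ = _ := by ring

end SobolevMul

open SobolevMul in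
/-- For `s > 1/2` and `r ∈ [−s, s]`, there is `c > 0` such that for all
finitely supported sequences `A : ℤ → Matrix (Fin n) (Fin n) ℂ` and
`u : ℤ → (Fin n → ℂ)`, the discrete convolution `(A·u)(k) = ∑_h A(k−h) u(h)` satisfies
`‖A·u‖_r ≤ c ‖A‖_s ‖u‖_r` (squared, in terms of the weighted `ℓ²`-norms of Fourier
coefficients). -/
theorem stmt2 (s r : ℝ) (hs : 1 / 2 < s) (hr1 : -s ≤ r) (hr2 : r ≤ s) (n : ℕ) :
    ∃ c : ℝ, 0 < c ∧ ∀ (A : ℤ → Matrix (Fin n) (Fin n) ℂ) (u : ℤ → (Fin n → ℂ)),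
      (Function.support A).Finite → (Function.support u).Finite →
      (∑' k : ℤ, ((1 + |k| : ℤ) : ℝ) ^ (2 * r) * ‖∑' h : ℤ, (A (k - h)).mulVec (u h)‖ ^ 2)
        ≤ c ^ 2 * (∑' k : ℤ, ((1 + |k| : ℤ) : ℝ) ^ (2 * s) * ‖A k‖ ^ 2)
            * (∑' h : ℤ, ((1 + |h| : ℤ) : ℝ) ^ (2 * r) * ‖u h‖ ^ 2) := by
  set M : ℝ := 9 * (2 ^ |r|) ^ 2 * ∑' k, (w k ^ (-s)) ^ 2 with hM
  have hM0 : 0 ≤ M := mul_nonneg (by positivity) (tsum_nonneg fun _ => sq_nonneg _)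
  refine ⟨√(M + 1), Real.sqrt_pos.2 (by linarith), fun A u hA hu => ?_⟩
  rw [Real.sq_sqrt (by linarith)]
  change (∑' k : ℤ, w k ^ (2 * r) * ‖∑' h : ℤ, (A (k - h)).mulVec (u h)‖ ^ 2)
        ≤ (M + 1) * (∑' k : ℤ, w k ^ (2 * s) * ‖A k‖ ^ 2)
            * (∑' h : ℤ, w h ^ (2 * r) * ‖u h‖ ^ 2)
  simp only [rpow_two_mul, ← mul_pow]
  have hinner : ∀ k, ∑' h : ℤ, (A (k - h)).mulVec (u h) =
      ∑ h ∈ hu.toFinset, (A (k - h)).mulVec (u h) := fun k =>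
    tsum_eq_sum fun h hh => by
      have : u h = 0 := by simpa using hh
      rw [this, Matrix.mulVec_zero]
  simp only [hinner]
  -- The convolution is supported in the sumset of the two supports.
  rw [tsum_eq_sum (s := Finset.image₂ (· + ·) hA.toFinset hu.toFinset)]
  swap
  · intro k hk
    have : ∑ h ∈ hu.toFinset, (A (k - h)).mulVec (u h) = 0 := by
      refine Finset.sum_eq_zero fun h hh => ?_
      have hA0 : A (k - h) = 0 := by
        by_contra hne
        exact hk (Finset.mem_image₂.2 ⟨k - h, by simpa using hne, h, hh, by simp⟩)
      rw [hA0, Matrix.zero_mulVec]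
    rw [this]; simp
  have hsA : Summable fun k => (w k ^ s * ‖A k‖) ^ 2 :=
    summable_of_hasFiniteSupport (hA.subset fun k hk => by
      contrapose! hk
      simp_all)
  have hsu : Summable fun k => (w k ^ r * ‖u k‖) ^ 2 :=
    summable_of_hasFiniteSupport (hu.subset fun k hk => by
      contrapose! hk
      simp_all)
  have main := scalar_bound hs hr1 hr2 (fun k => norm_nonneg (A k)) (fun k => norm_nonneg (u k))
    hsA hsu (Finset.image₂ (· + ·) hA.toFinset hu.toFinset) hu.toFinset
  have hP : 0 ≤ (∑' k, (w k ^ s * ‖A k‖) ^ 2) * ∑' k, (w k ^ r * ‖u k‖) ^ 2 :=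
    mul_nonneg (tsum_nonneg fun _ => sq_nonneg _) (tsum_nonneg fun _ => sq_nonneg _)
  rw [← hM] at main
  rw [mul_assoc]
  calc _ ≤ _ := ?_
    _ ≤ _ := main
    _ ≤ _ := by gcongr; linarith
  refine Finset.sum_le_sum fun k _ => ?_
  have hw := (Real.rpow_pos_of_pos (w_pos k) r).le
  gcongr
  exact (norm_sum_le _ _).trans (Finset.sum_le_sum fun h _ => Matrix.linfty_opNorm_mulVec _ _)
end

section
/- Fix s > 1/2, r ∈ [−s, s], and n ∈ ℕ. Then there exists a constant c > 0 such that for all finitely supported sequences A : ℤ → Matrix (Fin n) (Fin n) ℂ and u : ℤ → (Fin n → ℂ), the discrete convolution (A·u)(k) := ∑_{h∈ℤ} A(k−h) u(h) satisfies ∑_{k∈ℤ} (1+|k|)^{2r} ‖(A·u)(k)‖² ≤ c² · (∑_{k∈ℤ} (1+|k|)^{2r} ‖A(k)‖²) · (∑_{h∈ℤ} (1+|h|)^{2s} ‖u(h)‖²). Equivalently, pointwise matrix–vector multiplication extends uniquely to a continuous bilinear map H^r(𝕋, Hom(ℝⁿ,ℝⁿ)) × H^s(𝕋, ℝⁿ)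 → H^r(𝕋, ℝⁿ) with ‖A·u‖_r ≤ c ‖A‖_r ‖u‖_s. -/
/-!
Write `w k = 1 + |k|`. Since `w` is subadditive, `w(k)^r` is dominated by
`2^s w(k-h)^r w(h)^s (w(h)^(-s) + w(k-h)^(-s) + w(k)^(-s))` whenever `|r| ≤ s`
(`weight_bound`): for `r ≥ 0` one compares `w(k-h)` with `w(h)` in `w(k) ≤ w(k-h) + w(h)`, and
`r < 0` follows by exchanging the roles of `k` and `k-h`. With `f = w^r ‖A‖`, `g = w^s ‖u‖` and
`p = w^(-s)` this reduces the claim to an `ℓ²` bound for three bilinear sums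
(`conv_bound`). As `p ∈ ℓ²` because `s > 1/2`, each of them is handled by Cauchy–Schwarz
in `h`: the first two by pairing `p` against `f(k-h) g(h)`, the third by pairing `f(k-h)` against
`g(h)` and summing `p(k)^2` over `k`.
-/

open Matrix

attribute [local instance] Matrix.linftyOpNormedAddCommGroup

/-- The three-weight inequality for a nonnegative exponent `t ≤ s`. -/
lemma weight_bound_nonneg {s t x y z : ℝ} (ht : 0 ≤ t) (hts : t ≤ s) (hx : 0 < x) (hy : 0 < y)
    (hz : 0 < z) (h : x ≤ y + z) :
    x ^ t ≤ 2 ^ s * (y ^ t * z ^ s * (z ^ (-s) + y ^ (-s))) := by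
  have h2 : (2 : ℝ) ^ t ≤ 2 ^ s := Real.rpow_le_rpow_of_exponent_le (by norm_num) hts
  have hzs : z ^ s * z ^ (-s) = 1 := by rw [← Real.rpow_add hz]; simp
  rcases le_total y z with hyz | hyz
  · have h1 : x ^ t ≤ 2 ^ t * z ^ t := by
      rw [← Real.mul_rpow (by norm_num) hz.le]
      exact Real.rpow_le_rpow hx.le (by linarith) ht
    have h3 : z ^ (t - s) ≤ y ^ (t - s) :=
      Real.rpow_le_rpow_of_nonpos hy hyz (by linarith)
    have h4 : y ^ t * y ^ (-s) = y ^ (t - s) := by rw [← Real.rpow_add hy]; rfl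
    have h5 : z ^ s * z ^ (t - s) = z ^ t := by rw [← Real.rpow_add hz]; congr 1; ring
    calc x ^ t ≤ 2 ^ t * z ^ t := h1
      _ ≤ 2 ^ s * z ^ t := by gcongr
      _ ≤ 2 ^ s * (y ^ t * z ^ s * (z ^ (-s) + y ^ (-s))) := by
        gcongr
        calc z ^ t = z ^ s * z ^ (t - s) := h5.symm
          _ ≤ z ^ s * y ^ (t - s) := by gcongr
          _ = y ^ t * z ^ s * y ^ (-s) := by rw [← h4]; ring
          _ ≤ _ := by
            gcongr
            have : 0 < z ^ (-s) := by positivity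
            linarith
  · have h1 : x ^ t ≤ 2 ^ t * y ^ t := by
      rw [← Real.mul_rpow (by norm_num) hy.le]
      exact Real.rpow_le_rpow hx.le (by linarith) ht
    calc x ^ t ≤ 2 ^ t * y ^ t := h1
      _ ≤ 2 ^ s * y ^ t := by gcongr
      _ ≤ 2 ^ s * (y ^ t * z ^ s * (z ^ (-s) + y ^ (-s))) := by
        gcongr
        calc y ^ t = y ^ t * (z ^ s * z ^ (-s)) := by rw [hzs, mul_one]
          _ = y ^ t * z ^ s * z ^ (-s) := by ring
          _ ≤ _ := by
            gcongr
            have : 0 < y ^ (-s) := by positivity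
            linarith

/-- The three-weight inequality for an exponent `r ∈ [-s, s]` of either sign. -/
lemma weight_bound {s r x y z : ℝ} (hr1 : -s ≤ r) (hr2 : r ≤ s) (hx : 0 < x) (hy : 0 < y)
    (hz : 0 < z) (hxyz : x ≤ y + z) (hyxz : y ≤ x + z) :
    x ^ r ≤ 2 ^ s * (y ^ r * z ^ s * (z ^ (-s) + y ^ (-s) + x ^ (-s))) := by
  rcases le_total 0 r with hr | hr
  · refine (weight_bound_nonneg hr hr2 hx hy hz hxyz).trans ?_
    have : 0 ≤ x ^ (-s) := by positivity
    gcongr _ * (_ * ?_)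
    linarith
  · have h := weight_bound_nonneg (s := s) (t := -r) (by linarith) (by linarith) hy hx hz hyxz
    have hxr : x ^ (-r) * x ^ r = 1 := by rw [← Real.rpow_add hx]; simp
    have hyr : y ^ (-r) * y ^ r = 1 := by rw [← Real.rpow_add hy]; simp
    calc x ^ r = y ^ (-r) * (x ^ r * y ^ r) := by
          linear_combination (-x ^ r) * hyr
      _ ≤ 2 ^ s * (x ^ (-r) * z ^ s * (z ^ (-s) + x ^ (-s))) * (x ^ r * y ^ r) := by gcongr
      _ = 2 ^ s * (y ^ r * z ^ s * (z ^ (-s) + x ^ (-s))) := by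
          linear_combination (2 ^ s * (y ^ r * z ^ s * (z ^ (-s) + x ^ (-s)))) * hxr
      _ ≤ _ := by
          gcongr
          have : 0 < y ^ (-s) := by positivity
          linarith

lemma summable_weight {b : ℝ} (hb : 1 < b) :
    Summable fun k : ℤ => ((1 + |k| : ℤ) : ℝ) ^ (-b) := by
  have h : Summable fun n : ℕ => ((n : ℝ) + 1) ^ (-b) := by
    have := (summable_nat_add_iff 1).2 (Real.summable_nat_rpow.2 (by linarith : -b < -1))
    simpa using this
  refine Summable.of_nat_of_neg ?_ ?_ <;> simpa [add_comm] using h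

lemma sum_translate_le {q : ℤ → ℝ} (hq : Summable q) (h0 : ∀ k, 0 ≤ q k) (T : Finset ℤ) (h : ℤ) :
    ∑ k ∈ T, q (k - h) ≤ ∑' k, q k := by
  rw [← (Equiv.subRight h).tsum_eq q]
  exact ((Equiv.subRight h).summable_iff.2 hq).sum_le_tsum T (fun _ _ => h0 _)

lemma sum_reflect_le {q : ℤ → ℝ} (hq : Summable q) (h0 : ∀ k, 0 ≤ q k) (U : Finset ℤ) (k : ℤ) :
    ∑ h ∈ U, q (k - h) ≤ ∑' k, q k := by
  rw [← (Equiv.subLeft k).tsum_eq q]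
  exact ((Equiv.subLeft k).summable_iff.2 hq).sum_le_tsum U (fun _ _ => h0 _)

/-- The `ℓ²` bound for the convolution of `f` and `g` with kernel `p(h) + p(k-h) + p(k)`,
where `p ∈ ℓ²`. -/
lemma conv_bound {p f : ℤ → ℝ} (hp : Summable fun k => p k ^ 2) (hf : Summable fun k => f k ^ 2)
    (g : ℤ → ℝ) (T U : Finset ℤ) :
    ∑ k ∈ T, (∑ h ∈ U, (p h + p (k - h) + p k) * (f (k - h) * g h)) ^ 2
      ≤ 9 * (∑' k, p k ^ 2) * (∑' k, f k ^ 2) * ∑ h ∈ U, g h ^ 2 := by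
  set M := ∑' k, p k ^ 2
  set F := ∑' k, f k ^ 2
  set G := ∑ h ∈ U, g h ^ 2
  have hM : 0 ≤ M := tsum_nonneg fun _ => sq_nonneg _
  have hF : 0 ≤ F := tsum_nonneg fun _ => sq_nonneg _
  have hG : 0 ≤ G := Finset.sum_nonneg fun _ _ => sq_nonneg _
  have hfg : ∑ k ∈ T, ∑ h ∈ U, (f (k - h) * g h) ^ 2 ≤ F * G := by
    rw [Finset.sum_comm, Finset.mul_sum]
    refine Finset.sum_le_sum fun h _ => ?_
    simp_rw [mul_pow]
    rw [← Finset.sum_mul]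
    exact mul_le_mul_of_nonneg_right
      (sum_translate_le hf (fun _ => sq_nonneg _) T h) (sq_nonneg _)
  have hpT : ∑ k ∈ T, p k ^ 2 ≤ M := hp.sum_le_tsum T fun _ _ => sq_nonneg _
  have key : ∀ k, (∑ h ∈ U, (p h + p (k - h) + p k) * (f (k - h) * g h)) ^ 2
      ≤ 6 * M * ∑ h ∈ U, (f (k - h) * g h) ^ 2 + 3 * (F * G) * p k ^ 2 := by
    intro k
    have e : ∑ h ∈ U, (p h + p (k - h) + p k) * (f (k - h) * g h)
        = ∑ h ∈ U, p h * (f (k - h) * g h) + ∑ h ∈ U, p (k - h) * (f (k - h) * g h)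
          + p k * ∑ h ∈ U, f (k - h) * g h := by
      rw [Finset.mul_sum, ← Finset.sum_add_distrib, ← Finset.sum_add_distrib]
      exact Finset.sum_congr rfl fun _ _ => by ring
    have hS : 0 ≤ ∑ h ∈ U, (f (k - h) * g h) ^ 2 := Finset.sum_nonneg fun _ _ => sq_nonneg _
    have h1 : (∑ h ∈ U, p h * (f (k - h) * g h)) ^ 2
        ≤ M * ∑ h ∈ U, (f (k - h) * g h) ^ 2 :=
      (Finset.sum_mul_sq_le_sq_mul_sq _ _ _).trans (mul_le_mul_of_nonneg_right
        (hp.sum_le_tsum U fun _ _ => sq_nonneg _) hS)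
    have h2 : (∑ h ∈ U, p (k - h) * (f (k - h) * g h)) ^ 2
        ≤ M * ∑ h ∈ U, (f (k - h) * g h) ^ 2 :=
      (Finset.sum_mul_sq_le_sq_mul_sq _ _ _).trans (mul_le_mul_of_nonneg_right
        (sum_reflect_le hp (fun _ => sq_nonneg _) U k) hS)
    have h3 : (∑ h ∈ U, f (k - h) * g h) ^ 2 ≤ F * G :=
      (Finset.sum_mul_sq_le_sq_mul_sq _ _ _).trans (mul_le_mul_of_nonneg_right
        (sum_reflect_le hf (fun _ => sq_nonneg _) U k) hG)
    have h4 := mul_le_mul_of_nonneg_left h3 (sq_nonneg (p k))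
    rw [e]
    generalize ∑ h ∈ U, p h * (f (k - h) * g h) = a at *
    generalize ∑ h ∈ U, p (k - h) * (f (k - h) * g h) = b at *
    generalize ∑ h ∈ U, f (k - h) * g h = d at *
    nlinarith [sq_nonneg (a - b), sq_nonneg (a - p k * d), sq_nonneg (b - p k * d)]
  calc _ ≤ ∑ k ∈ T, (6 * M * ∑ h ∈ U, (f (k - h) * g h) ^ 2 + 3 * (F * G) * p k ^ 2) :=
        Finset.sum_le_sum fun k _ => key k
    _ = 6 * M * ∑ k ∈ T, ∑ h ∈ U, (f (k - h) * g h) ^ 2 + 3 * (F * G) * ∑ k ∈ T, p k ^ 2 := by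
        rw [Finset.sum_add_distrib, ← Finset.mul_sum, ← Finset.mul_sum]
    _ ≤ 6 * M * (F * G) + 3 * (F * G) * M := by gcongr
    _ = _ := by ring

/-- For `s > 1/2` and `r ∈ [−s, s]`, there is `c > 0` such that for all
finitely supported sequences `A : ℤ → Matrix (Fin n) (Fin n) ℂ` and
`u : ℤ → (Fin n → ℂ)`, the discrete convolution `(A·u)(k) = ∑_h A(k−h) u(h)` satisfies
`‖A·u‖_r ≤ c ‖A‖_r ‖u‖_s` (squared, in terms of the weighted `ℓ²`-norms of Fourier
coefficients). -/
theorem stmt3 (s r : ℝ) (hs : 1 / 2 < s) (hr1 : -s ≤ r) (hr2 : r ≤ s) (n : ℕ) :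
    ∃ c : ℝ, 0 < c ∧ ∀ (A : ℤ → Matrix (Fin n) (Fin n) ℂ) (u : ℤ → (Fin n → ℂ)),
      (Function.support A).Finite → (Function.support u).Finite →
      (∑' k : ℤ, ((1 + |k| : ℤ) : ℝ) ^ (2 * r) * ‖∑' h : ℤ, (A (k - h)).mulVec (u h)‖ ^ 2)
        ≤ c ^ 2 * (∑' k : ℤ, ((1 + |k| : ℤ) : ℝ) ^ (2 * r) * ‖A k‖ ^ 2)
            * (∑' h : ℤ, ((1 + |h| : ℤ) : ℝ) ^ (2 * s) * ‖u h‖ ^ 2) := by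
  set w : ℤ → ℝ := fun k => ((1 + |k| : ℤ) : ℝ) with hw
  have hw0 : ∀ k, 0 < w k := fun k => by simp only [hw]; positivity
  have hadd : ∀ a b, w (a + b) ≤ w a + w b := fun a b => by
    simp only [hw]
    have := abs_add_le a b
    exact_mod_cast (by linarith : 1 + |a + b| ≤ 1 + |a| + (1 + |b|))
  have hneg : ∀ a, w (-a) = w a := fun a => by simp [hw]
  have hsq : ∀ (k : ℤ) (t : ℝ), w k ^ (2 * t) = (w k ^ t) ^ 2 := fun k t => by
    rw [← Real.rpow_natCast, ← Real.rpow_mul (hw0 k).le, mul_comm]; rfl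
  have hp : Summable fun k => (w k ^ (-s)) ^ 2 := by
    have := summable_weight (b := 2 * s) (by linarith)
    refine this.congr fun k => ?_
    rw [← hsq, mul_neg]
  set M := ∑' k, (w k ^ (-s)) ^ 2 with hMdef
  have hM : 0 < M := hp.tsum_pos (fun _ => sq_nonneg _) 0 (by have := hw0 0; positivity)
  refine ⟨3 * 2 ^ s * √M, by positivity, fun A u hA hu => ?_⟩
  change (∑' k : ℤ, w k ^ (2 * r) * ‖∑' h : ℤ, (A (k - h)).mulVec (u h)‖ ^ 2)
        ≤ _ * (∑' k : ℤ, w k ^ (2 * r) * ‖A k‖ ^ 2)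
            * (∑' h : ℤ, w h ^ (2 * s) * ‖u h‖ ^ 2)
  set U := hu.toFinset
  have hU : ∀ h, h ∉ U → u h = 0 := fun h hh => by simpa [U] using hh
  have hf : Summable fun k => (w k ^ r * ‖A k‖) ^ 2 := by
    refine summable_of_ne_finset_zero (s := hA.toFinset) fun k hk => ?_
    have : A k = 0 := by simpa using hk
    simp [this]
  have eA : (∑' k : ℤ, w k ^ (2 * r) * ‖A k‖ ^ 2) = ∑' k, (w k ^ r * ‖A k‖) ^ 2 := by
    simp_rw [hsq, mul_pow]
  have eu : (∑' h : ℤ, w h ^ (2 * s) * ‖u h‖ ^ 2) = ∑ h ∈ U, (w h ^ s * ‖u h‖) ^ 2 := by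
    rw [tsum_eq_sum (s := U) fun h hh => by simp [hU h hh]]
    simp_rw [hsq, mul_pow]
  have hpt : ∀ k, w k ^ r * ‖∑' h : ℤ, (A (k - h)).mulVec (u h)‖
      ≤ 2 ^ s * ∑ h ∈ U, (w h ^ (-s) + w (k - h) ^ (-s) + w k ^ (-s))
          * ((w (k - h) ^ r * ‖A (k - h)‖) * (w h ^ s * ‖u h‖)) := by
    intro k
    have := hw0 k
    rw [tsum_eq_sum (s := U) fun h hh => by simp [hU h hh]]
    calc _ ≤ w k ^ r * ∑ h ∈ U, ‖A (k - h)‖ * ‖u h‖ := by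
          gcongr
          exact norm_sum_le_of_le _ fun h _ => Matrix.linfty_opNorm_mulVec _ _
      _ ≤ _ := by
          rw [Finset.mul_sum, Finset.mul_sum]
          refine Finset.sum_le_sum fun h _ => ?_
          have hb := weight_bound hr1 hr2 (hw0 k) (hw0 (k - h)) (hw0 h)
            (by simpa using hadd (k - h) h) (by simpa [hneg, ← sub_eq_add_neg] using hadd k (-h))
          calc _ ≤ _ := mul_le_mul_of_nonneg_right hb (by positivity)
            _ = _ := by ring
  rw [eA, eu]
  refine Real.tsum_le_of_sum_le (fun k => ?_) fun T => ?_
  · have := hw0 k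
    positivity
  calc _ ≤ ∑ k ∈ T, (2 ^ s) ^ 2 * (∑ h ∈ U, (w h ^ (-s) + w (k - h) ^ (-s) + w k ^ (-s))
          * ((w (k - h) ^ r * ‖A (k - h)‖) * (w h ^ s * ‖u h‖))) ^ 2 := by
        refine Finset.sum_le_sum fun k _ => ?_
        have := hw0 k
        rw [hsq, ← mul_pow, ← mul_pow]
        exact pow_le_pow_left₀ (by positivity) (hpt k) 2
    _ ≤ (2 ^ s) ^ 2 * (9 * M * (∑' k, (w k ^ r * ‖A k‖) ^ 2)
          * ∑ h ∈ U, (w h ^ s * ‖u h‖) ^ 2) := by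
        rw [← Finset.mul_sum]
        gcongr
        exact conv_bound (p := fun k => w k ^ (-s)) (f := fun k => w k ^ r * ‖A k‖) hp hf
          (fun h => w h ^ s * ‖u h‖) T U
    _ = _ := by
        rw [mul_pow, Real.sq_sqrt hM.le]
        ring
end

section
/- Fix s ∈ (1/2, 1) and r > 1/2. For k ∈ ℤ set F(k) := ∑_{h∈ℤ} | |k|^{2(s−1)} k − |h|^{2(s−1)} h |² / ((1+|k−h|)^{2s} (1+|h|)^{2r}), where the term |h|^{2(s−1)} h is interpreted as 0 when h = 0 (similarly for k = 0). Then F(k) is finite for every k ∈ ℤ, and there is a constant C > 0 such that (1+|k|)^{2(1−s)} F(k) ≤ C for all k ∈ ℤ; in particular F(k) = O(1/|k|^{2(1−s)}) as |k| → ∞. -/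
/-!
Write `φ(x) = |x|^b x` with `b = 2(s-1) ∈ (-1, 0)`, `d = |k - h|` and `M = max(|k|, |h|)`.

The key point is the elementary bound `|φ(k) - φ(h)| ≤ 2 d M^b` (`abs_phi_sub_le`). Since
`d ≤ 2M` and, for integers not both zero, `1 ≤ M`, both `(1+|k|)^{-b}` and `(1+d)^{-b}` are at most
a constant times `M^{-b}`, so that `(1+|k|)^{-b} |φ(k) - φ(h)|² ≤ 24 (1+d)^{2s}` (`weighted_bound`).
Hence each summand, multiplied by `(1+|k|)^{2(1-s)}`, is at most `24 (1+|h|)^{-2r}`, which is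
independent of `k` and summable because `2r > 1`.
-/

/-- The difference bound in the case `|y| ≤ |x|`, where the maximum is `|x|`. It follows from
`φ(x) - φ(y) = |x|^b (x - y) - (|y|^b - |x|^b) y`, because monotonicity of `t ↦ t^(b+1)` bounds
the last term by `|x|^b (|x| - |y|)`. -/
lemma abs_phi_sub_le_of_le {b : ℝ} (hb1 : -1 < b) (hb0 : b < 0) {x y : ℝ} (hxy : |y| ≤ |x|) :
    |(|x| ^ b * x - |y| ^ b * y)| ≤ 2 * |x - y| * |x| ^ b := by
  have hmono : |y| ^ b * |y| ≤ |x| ^ b * |x| := by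
    rw [← Real.rpow_add_one' (abs_nonneg y) (by linarith),
      ← Real.rpow_add_one' (abs_nonneg x) (by linarith)]
    exact Real.rpow_le_rpow (abs_nonneg y) hxy (by linarith)
  have hX : 0 ≤ |x| ^ b := by positivity
  have htri : |x| - |y| ≤ |x - y| := abs_sub_abs_le_abs_sub x y
  have hsecond : |(|x| ^ b - |y| ^ b) * y| ≤ |x| ^ b * |x - y| := by
    rcases eq_or_ne y 0 with rfl | hy
    · simp only [mul_zero, abs_zero]
      positivity
    have hanti : |x| ^ b ≤ |y| ^ b :=
      Real.rpow_le_rpow_of_nonpos (abs_pos.mpr hy) hxy hb0.le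
    rw [abs_mul, abs_of_nonpos (by linarith)]
    nlinarith [mul_le_mul_of_nonneg_left htri hX]
  calc |(|x| ^ b * x - |y| ^ b * y)|
      = |(|x| ^ b * (x - y) + (|x| ^ b - |y| ^ b) * y)| := by ring_nf
    _ ≤ |(|x| ^ b * (x - y))| + |(|x| ^ b - |y| ^ b) * y| := abs_add_le _ _
    _ ≤ 2 * |x - y| * |x| ^ b := by
        rw [abs_mul, abs_of_nonneg hX]
        linarith

lemma abs_phi_sub_le {b : ℝ} (hb1 : -1 < b) (hb0 : b < 0) (x y : ℝ) :
    |(|x| ^ b * x - |y| ^ b * y)| ≤ 2 * |x - y| * (max |x| |y|) ^ b := by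
  rcases le_total |y| |x| with h | h
  · rw [max_eq_left h]
    exact abs_phi_sub_le_of_le hb1 hb0 h
  · rw [max_eq_right h, abs_sub_comm, abs_sub_comm x y]
    exact abs_phi_sub_le_of_le hb1 hb0 h

/-- The numerator, weighted by the claimed decay, is absorbed by the first factor of the
denominator. The hypothesis `1 ≤ max |x| |y|` holds for integers not both zero. -/
lemma weighted_bound {s : ℝ} (hs1 : 1 / 2 < s) (hs2 : s < 1) {x y : ℝ}
    (hM : 1 ≤ max |x| |y|) :
    (1 + |x|) ^ (2 * (1 - s)) * (|x| ^ (2 * (s - 1)) * x - |y| ^ (2 * (s - 1)) * y) ^ 2 ≤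
      24 * (1 + |x - y|) ^ (2 * s) := by
  have hD := abs_phi_sub_le (b := 2 * (s - 1)) (by linarith) (by linarith) x y
  have hxM : |x| ≤ max |x| |y| := le_max_left _ _
  have hyM : |y| ≤ max |x| |y| := le_max_right _ _
  have hd2 : |x - y| ≤ |x| + |y| := abs_sub x y
  generalize max |x| |y| = M at *
  generalize hDdef : |x| ^ (2 * (s - 1)) * x - |y| ^ (2 * (s - 1)) * y = D at *
  have hd0 : 0 ≤ |x - y| := abs_nonneg _
  generalize |x - y| = d at *
  have hM0 : 0 < M := by linarith
  -- A bound `u ≤ A M` with `A ≥ 1` passes to the power `c = 2(1-s) ∈ (0, 1)`, since `A^c ≤ A`.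
  have hpow : ∀ u A : ℝ, 0 ≤ u → 1 ≤ A → u ≤ A * M →
      u ^ (2 * (1 - s)) ≤ A * M ^ (2 * (1 - s)) := by
    intro u A hu hA huA
    calc u ^ (2 * (1 - s)) ≤ (A * M) ^ (2 * (1 - s)) :=
          Real.rpow_le_rpow hu huA (by linarith)
      _ = A ^ (2 * (1 - s)) * M ^ (2 * (1 - s)) := Real.mul_rpow (by linarith) hM0.le
      _ ≤ A * M ^ (2 * (1 - s)) := by
          gcongr
          exact Real.rpow_le_self_of_one_le hA (by linarith)
  have hK := hpow (1 + |x|) 2 (by positivity) (by norm_num) (by linarith)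
  have hd := hpow (1 + d) 3 (by positivity) (by norm_num) (by linarith)
  have hMb : M ^ (2 * (s - 1)) = (M ^ (2 * (1 - s)))⁻¹ := by
    rw [← Real.rpow_neg hM0.le]
    ring_nf
  have hP : 0 < M ^ (2 * (1 - s)) := by positivity
  have hsplit : (1 + d) ^ (2 * s) * (1 + d) ^ (2 * (1 - s)) = (1 + d) ^ 2 := by
    rw [← Real.rpow_add (by positivity), ← Real.rpow_natCast]
    push_cast
    ring_nf
  rw [hMb] at hD
  generalize M ^ (2 * (1 - s)) = P at *
  have hE : 0 < (1 + d) ^ (2 * s) := by positivity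
  generalize (1 + d) ^ (2 * s) = E at *
  have hD2 : D ^ 2 ≤ (2 * d * P⁻¹) ^ 2 := by
    rw [← sq_abs D]
    gcongr
  have hEP : d ^ 2 ≤ E * (3 * P) := by
    have := mul_le_mul_of_nonneg_left hd hE.le
    nlinarith
  calc (1 + |x|) ^ (2 * (1 - s)) * D ^ 2 ≤ (2 * P) * (2 * d * P⁻¹) ^ 2 := by gcongr
    _ = 8 * d ^ 2 / P := by
        field_simp
        ring
    _ ≤ 24 * E := by
        rw [div_le_iff₀ hP]
        linarith

lemma summable_weight_s5 {p : ℝ} (hp : 1 < p) :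
    Summable (fun h : ℤ => 24 / (1 + |(h : ℝ)|) ^ p) := by
  have hnat : Summable (fun n : ℕ => 24 / (1 + |(n : ℝ)|) ^ p) := by
    refine (((Real.summable_one_div_nat_add_rpow 1 p).mpr hp).mul_left 24).congr fun n => ?_
    rw [abs_of_nonneg (by positivity : (0 : ℝ) ≤ (n : ℝ) + 1), Nat.abs_cast, add_comm,
      mul_one_div]
  refine Summable.of_nat_of_neg ?_ ?_
  · simpa using hnat
  · simpa using hnat

lemma summand_le {s r : ℝ} (hs1 : 1 / 2 < s) (hs2 : s < 1) (k h : ℤ) :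
    ((1 + |k| : ℤ) : ℝ) ^ (2 * (1 - s)) *
      ((((|k| : ℤ) : ℝ) ^ (2 * (s - 1)) * (k : ℝ) -
          ((|h| : ℤ) : ℝ) ^ (2 * (s - 1)) * (h : ℝ)) ^ 2 /
        (((1 + |k - h| : ℤ) : ℝ) ^ (2 * s) * ((1 + |h| : ℤ) : ℝ) ^ (2 * r))) ≤
      24 / (1 + |(h : ℝ)|) ^ (2 * r) := by
  push_cast
  by_cases hkh : k = 0 ∧ h = 0
  · obtain ⟨rfl, rfl⟩ := hkh
    simp
  have hM : (1 : ℝ) ≤ max |(k : ℝ)| |(h : ℝ)| := by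
    rw [le_max_iff]
    rcases not_and_or.mp hkh with hk | hh
    · left
      exact_mod_cast Int.one_le_abs hk
    · right
      exact_mod_cast Int.one_le_abs hh
  have hw := weighted_bound hs1 hs2 hM
  have hE : (0 : ℝ) < (1 + |(k : ℝ) - h|) ^ (2 * s) := by positivity
  have hH : (0 : ℝ) < (1 + |(h : ℝ)|) ^ (2 * r) := by positivity
  rw [← mul_div_assoc, ← div_div]
  gcongr
  rwa [div_le_iff₀ hE]

/-- Fix `s ∈ (1/2, 1)` and `r > 1/2`. For `k ∈ ℤ` set
`F(k) := ∑_{h∈ℤ} | |k|^{2(s−1)} k − |h|^{2(s−1)} h |² / ((1+|k−h|)^{2s} (1+|h|)^{2r})`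
(with `|h|^{2(s−1)} h := 0` for `h = 0`, which is the `rpow` convention since the
exponent is nonzero). Then `F(k)` is finite for every `k`, and there is `C > 0` with
`(1+|k|)^{2(1−s)} F(k) ≤ C` for all `k`; in particular `F(k) = O(1/|k|^{2(1−s)})`. -/
theorem stmt5 (s r : ℝ) (hs1 : 1 / 2 < s) (hs2 : s < 1) (hr : 1 / 2 < r) :
    (∀ k : ℤ, Summable (fun h : ℤ =>
      (((|k| : ℤ) : ℝ) ^ (2 * (s - 1)) * (k : ℝ) - ((|h| : ℤ) : ℝ) ^ (2 * (s - 1)) * (h : ℝ)) ^ 2 /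
        (((1 + |k - h| : ℤ) : ℝ) ^ (2 * s) * ((1 + |h| : ℤ) : ℝ) ^ (2 * r)))) ∧
    ∃ C : ℝ, 0 < C ∧ ∀ k : ℤ,
      ((1 + |k| : ℤ) : ℝ) ^ (2 * (1 - s)) *
        (∑' h : ℤ,
          (((|k| : ℤ) : ℝ) ^ (2 * (s - 1)) * (k : ℝ) - ((|h| : ℤ) : ℝ) ^ (2 * (s - 1)) * (h : ℝ)) ^ 2 /
            (((1 + |k - h| : ℤ) : ℝ) ^ (2 * s) * ((1 + |h| : ℤ) : ℝ) ^ (2 * r)))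
        ≤ C := by
  have hW := summable_weight_s5 (p := 2 * r) (by linarith)
  have hpos : ∀ k : ℤ, (0 : ℝ) < ((1 + |k| : ℤ) : ℝ) ^ (2 * (1 - s)) := by
    intro k
    push_cast
    positivity
  have hsum : ∀ k : ℤ, Summable (fun h : ℤ => ((1 + |k| : ℤ) : ℝ) ^ (2 * (1 - s)) *
      ((((|k| : ℤ) : ℝ) ^ (2 * (s - 1)) * (k : ℝ) -
          ((|h| : ℤ) : ℝ) ^ (2 * (s - 1)) * (h : ℝ)) ^ 2 /
        (((1 + |k - h| : ℤ) : ℝ) ^ (2 * s) * ((1 + |h| : ℤ) : ℝ) ^ (2 * r)))) := by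
    intro k
    refine Summable.of_nonneg_of_le (fun h => ?_) (fun h => summand_le hs1 hs2 k h) hW
    push_cast
    positivity
  refine ⟨fun k => (summable_mul_left_iff (hpos k).ne').mp (hsum k),
    ∑' h : ℤ, 24 / (1 + |(h : ℝ)|) ^ (2 * r), ?_, fun k => ?_⟩
  · exact hW.tsum_pos (fun h => by positivity) 0 (by positivity)
  · rw [← tsum_mul_left]
    exact (hsum k).tsum_le_tsum (fun h => summand_le hs1 hs2 k h) hW
end

section
/- Fix s ∈ (1/2, 1), r > 1/2, and n ∈ ℕ. Then there exists a constant c > 0 such that for all sequences A : ℤ → Matrix (Fin n) (Fin n) ℂ and u : ℤ → (Fin n → ℂ) with ∑_{k∈ℤ} (1+|k|)^{2s} ‖A(k)‖² < ∞ and ∑_{h∈ℤ} (1+|h|)^{2r} ‖u(h)‖² < ∞, the series w(k) := ∑_{h∈ℤ} ( |h|^{2(s−1)} h − |k|^{2(s−1)} k ) A(k−h) u(h) converges absolutely for every k ∈ ℤ (with the convention that |m|^{2(s−1)} m = 0 for m = 0), and ∑_{k∈ℤ} (1+|k|)^{2(1−s)} ‖w(k)‖² ≤ c² · (∑_{k∈ℤ}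 (1+|k|)^{2s} ‖A(k)‖²) · (∑_{h∈ℤ} (1+|h|)^{2r} ‖u(h)‖²). Equivalently, for every A ∈ H^s(𝕋, Hom(ℝⁿ,ℝⁿ)) and u ∈ H^r(𝕋, ℝⁿ) the commutator satisfies ‖[A, Δ^{s−1} ∘ d/dt] u‖_{1−s} ≤ c ‖A‖_s ‖u‖_r. -/
/-!
With `φ(m) = |m|^{2(s-1)} m` and `⟨k⟩ = 1 + |k|`, everything rests on the pointwise bound
`⟨k⟩^{1-s} |φ(h) - φ(k)| ≤ 8 ⟨k-h⟩^s` (`symbol_bound`). It comes from the concavity estimate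
`|φ(h) - φ(k)| ≤ 2 |h - k| M^{2(s-1)}`, `M = max(|h|,|k|)` (`abs_symbol_sub_le`): both `⟨k⟩` and
`|h-k|` are at most `2M`, so the factor `⟨k⟩^{1-s} |h-k|^{1-s}` is absorbed by `M^{2(s-1)}`.

The weighted summand is therefore dominated by
`8 ⟨h⟩^{-r} · (⟨k-h⟩^s ‖A(k-h)‖) · (⟨h⟩^r ‖u(h)‖)`. As `⟨h⟩^{-r}` is square summable for `r > 1/2`,
Cauchy–Schwarz in `h` followed by summation over `k` gives the claim (`convolution_bound`).
-/

open Matrix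

attribute [local instance] Matrix.linftyOpNormedAddCommGroup

/-- The power `t^σ = t^(σ-1) t` grows at most linearly near `y`, because `t ↦ t^(σ-1)` is antitone. -/
lemma rpow_sub_le_mul {x y σ : ℝ} (hx : 0 ≤ x) (hxy : x ≤ y) (h1 : σ ≤ 1) :
    y ^ (σ - 1) * y - x ^ (σ - 1) * x ≤ (y - x) * y ^ (σ - 1) := by
  rcases hx.eq_or_lt with rfl | hx
  · simp [mul_comm]
  · have := Real.rpow_le_rpow_of_nonpos hx hxy (by linarith : σ - 1 ≤ 0)
    nlinarith

lemma abs_symbol_sub_le_of_abs_le {p x y : ℝ} (hp : p ≤ 0) (hp1 : -1 < p) (hy : 0 < |y|)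
    (hxy : |x| ≤ |y|) :
    |(|x| ^ p * x - |y| ^ p * y)| ≤ 2 * |x - y| * |y| ^ p := by
  -- By oddness it suffices to treat `y > 0`.
  wlog hy0 : 0 < y generalizing x y
  · have := this (x := -x) (y := -y) (by simpa using hy) (by simpa using hxy)
      (by rcases lt_trichotomy y 0 with h | h | h
          · linarith
          · simp [h] at hy
          · exact absurd h hy0)
    rw [abs_neg, abs_neg] at this
    rw [show |x - y| = |-x - -y| by rw [← abs_neg]; ring_nf]
    rw [show |x| ^ p * x - |y| ^ p * y = -(|x| ^ p * -x - |y| ^ p * -y) by ring, abs_neg]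
    exact this
  rw [abs_of_pos hy0] at *
  have hyp : 0 < y ^ p := Real.rpow_pos_of_pos hy0 p
  have hmono : |x| ^ p * |x| ≤ y ^ p * y := by
    have e : ∀ t : ℝ, 0 ≤ t → t ^ p * t = t ^ (p + 1) := by
      intro t ht
      rw [Real.rpow_add_one' ht (by linarith)]
    rw [e _ (abs_nonneg x), e _ hy0.le]
    exact Real.rpow_le_rpow (abs_nonneg x) hxy (by linarith)
  rcases le_or_gt 0 x with hx | hx
  · rw [abs_of_nonneg hx] at *
    have h := rpow_sub_le_mul (σ := p + 1) hx hxy (by linarith)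
    rw [add_sub_cancel_right] at h
    rw [abs_sub_comm, abs_of_nonneg (by linarith), abs_sub_comm x y,
      abs_of_nonneg (by linarith : 0 ≤ y - x)]
    nlinarith [mul_nonneg (by linarith : 0 ≤ y - x) hyp.le]
  · rw [abs_of_neg hx] at *
    have hxp : 0 ≤ (-x) ^ p := Real.rpow_nonneg (by linarith) p
    rw [abs_sub_comm, abs_sub_comm x y, abs_of_pos (by linarith : 0 < y - x),
      abs_of_nonneg (by nlinarith [mul_nonneg hyp.le hy0.le])]
    nlinarith

lemma abs_symbol_sub_le {p x y : ℝ} (hp : p ≤ 0) (hp1 : -1 < p) (hM : 0 < max |x| |y|) :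
    |(|x| ^ p * x - |y| ^ p * y)| ≤ 2 * |x - y| * (max |x| |y|) ^ p := by
  rcases le_total |x| |y| with h | h
  · rw [max_eq_right h] at *
    exact abs_symbol_sub_le_of_abs_le hp hp1 hM h
  · rw [max_eq_left h] at *
    rw [abs_sub_comm, abs_sub_comm x y]
    exact abs_symbol_sub_le_of_abs_le hp hp1 hM h

/-- The symbol estimate for the commutator. It is stated on `ℤ` because the low frequencies need
`1 + |k| ≤ 2 max(|h|,|k|)`, which uses that a nonzero maximum is at least `1`. -/
lemma symbol_bound {s : ℝ} (hs1 : 1 / 2 < s) (hs2 : s < 1) (k h : ℤ) :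
    ((1 + |k| : ℤ) : ℝ) ^ (1 - s) *
      |((|h| : ℤ) : ℝ) ^ (2 * (s - 1)) * (h : ℝ) - ((|k| : ℤ) : ℝ) ^ (2 * (s - 1)) * (k : ℝ)|
      ≤ 8 * ((1 + |k - h| : ℤ) : ℝ) ^ s := by
  push_cast
  by_cases hkh : h = k
  · subst hkh; simp only [sub_self, abs_zero, mul_zero]; positivity
  have hM1 : (1 : ℝ) ≤ max |(h : ℝ)| |(k : ℝ)| := by
    have : (1 : ℤ) ≤ max |h| |k| := by
      rcases eq_or_ne h 0 with rfl | h0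
      · exact le_max_of_le_right (Int.one_le_abs (Ne.symm hkh))
      · exact le_max_of_le_left (Int.one_le_abs h0)
    exact_mod_cast this
  set M := max |(h : ℝ)| |(k : ℝ)| with hM
  have hM0 : 0 < M := by linarith
  have hhM : |(h : ℝ)| ≤ M := le_max_left _ _
  have hkM : |(k : ℝ)| ≤ M := le_max_right _ _
  have hd0 : 0 < |(k : ℝ) - h| := by
    rw [abs_pos, sub_ne_zero]; exact_mod_cast Ne.symm hkh
  have hd : |(k : ℝ) - h| ≤ 2 * M := (abs_sub _ _).trans (by linarith)
  have h1 := abs_symbol_sub_le (p := 2 * (s - 1)) (x := (h : ℝ)) (y := k)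
    (by linarith) (by linarith) hM0
  rw [← hM, abs_sub_comm (h : ℝ) k] at h1
  set d := |(k : ℝ) - h| with hdd
  have h2 : (1 + |(k : ℝ)|) ^ (1 - s) ≤ (2 * M) ^ (1 - s) :=
    Real.rpow_le_rpow (by positivity) (by linarith) (by linarith)
  have h3 : d ≤ (1 + d) ^ s * (2 * M) ^ (1 - s) := by
    calc d = d ^ s * d ^ (1 - s) := by rw [← Real.rpow_add hd0]; simp
      _ ≤ _ := by
        gcongr
        linarith
  have h4 : (2 * M) ^ (1 - s) * (2 * M) ^ (1 - s) * M ^ (2 * (s - 1)) ≤ 4 := by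
    rw [← Real.rpow_add (by linarith), Real.mul_rpow (by norm_num) hM0.le, mul_assoc,
      ← Real.rpow_add hM0, show 1 - s + (1 - s) + 2 * (s - 1) = 0 by ring, Real.rpow_zero, mul_one]
    calc (2 : ℝ) ^ (1 - s + (1 - s)) ≤ 2 ^ (2 : ℝ) :=
          Real.rpow_le_rpow_of_exponent_le (by norm_num) (by linarith)
      _ = 4 := by norm_num
  calc _ ≤ (2 * M) ^ (1 - s) * (2 * ((1 + d) ^ s * (2 * M) ^ (1 - s)) * M ^ (2 * (s - 1))) := by
        gcongr
        exact h1.trans (by gcongr)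
    _ = 2 * (1 + d) ^ s * ((2 * M) ^ (1 - s) * (2 * M) ^ (1 - s) * M ^ (2 * (s - 1))) := by ring
    _ ≤ 2 * (1 + d) ^ s * 4 := by gcongr
    _ = 8 * (1 + d) ^ s := by ring

lemma summable_one_add_abs_rpow {r : ℝ} (hr : 1 / 2 < r) :
    Summable (fun h : ℤ => (((1 + |h| : ℤ) : ℝ) ^ (-r)) ^ 2) := by
  have e : (fun h : ℤ => (((1 + |h| : ℤ) : ℝ) ^ (-r)) ^ 2)
      = fun h : ℤ => ((1 + |h| : ℤ) : ℝ) ^ (-(2 * r)) := by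
    funext h
    rw [← Real.rpow_natCast, ← Real.rpow_mul (by positivity)]
    congr 1; push_cast; ring
  rw [e]
  have hN : Summable (fun n : ℕ => ((n + 1 : ℕ) : ℝ) ^ (-(2 * r))) :=
    (summable_nat_add_iff 1).2 (Real.summable_nat_rpow.2 (by linarith))
  refine Summable.of_nat_of_neg ?_ ?_
  · exact hN.congr fun n => by simp [add_comm]
  · exact hN.congr fun n => by simp [add_comm]

/-- A kernel dominated by `g(h) a(k-h) b(h)` with `g, a, b ∈ ℓ²` has row sums in `ℓ²`:
Cauchy–Schwarz against `g` in each row, and `∑_{k,h} a(k-h)² b(h)² = ‖a‖² ‖b‖²`. -/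
lemma convolution_bound {E : Type*} [NormedAddCommGroup E] (F : ℤ → ℤ → E) (w g a b : ℤ → ℝ)
    (hw : ∀ k, 0 < w k) (hg : ∀ k, 0 ≤ g k) (ha : ∀ k, 0 ≤ a k) (hb : ∀ k, 0 ≤ b k)
    (sg : Summable fun k => g k ^ 2) (sa : Summable fun k => a k ^ 2)
    (sb : Summable fun k => b k ^ 2)
    (hF : ∀ k h, w k * ‖F k h‖ ≤ g h * (a (k - h) * b h)) :
    (∀ k, Summable fun h => ‖F k h‖) ∧
      ∑' k, (w k * ‖∑' h, F k h‖) ^ 2 ≤ (∑' k, g k ^ 2) * (∑' k, a k ^ 2) * ∑' k, b k ^ 2 := by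
  have hprod : Summable fun x : ℤ × ℤ => a x.1 ^ 2 * b x.2 ^ 2 :=
    sa.mul_of_nonneg sb (fun _ => sq_nonneg _) (fun _ => sq_nonneg _)
  let e : ℤ × ℤ ≃ ℤ × ℤ :=
    { toFun := fun x => (x.1 - x.2, x.2)
      invFun := fun x => (x.1 + x.2, x.2)
      left_inv := fun x => by simp
      right_inv := fun x => by simp }
  have hshear : Summable fun x : ℤ × ℤ => (a (x.1 - x.2) * b x.2) ^ 2 := by
    refine ((e.summable_iff (f := fun x : ℤ × ℤ => a x.1 ^ 2 * b x.2 ^ 2)).2 hprod).congr ?_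
    intro x; simp [e, mul_pow]
  have hrow : ∀ k, Summable fun h => (a (k - h) * b h) ^ 2 := fun k => hshear.prod_factor k
  have htotal : ∑' k, ∑' h, (a (k - h) * b h) ^ 2 = (∑' k, a k ^ 2) * ∑' k, b k ^ 2 := by
    rw [sa.tsum_mul_tsum sb hprod, ← e.tsum_eq, ← hshear.tsum_prod]
    exact tsum_congr fun x => by simp [e, mul_pow]
  have hCS : ∀ k, Summable (fun h => g h * (a (k - h) * b h)) ∧
      (∑' h, g h * (a (k - h) * b h)) ^ 2
        ≤ (∑' h, g h ^ 2) * ∑' h, (a (k - h) * b h) ^ 2 := by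
    intro k
    have hab : ∀ h, 0 ≤ a (k - h) * b h := fun h => mul_nonneg (ha _) (hb _)
    have h22 : (2 : ℝ).HolderConjugate 2 := Real.HolderConjugate.two_two
    have key := Real.inner_le_Lp_mul_Lq_tsum_of_nonneg h22 hg hab
      (by simpa using sg) (by simpa using hrow k)
    refine ⟨Real.summable_mul_of_Lp_Lq_of_nonneg h22 hg hab (by simpa using sg)
      (by simpa using hrow k), ?_⟩
    have hk := key
    simp only [Real.rpow_two, ← Real.sqrt_eq_rpow] at hk
    have h0 : 0 ≤ ∑' h, g h * (a (k - h) * b h) := tsum_nonneg fun h => mul_nonneg (hg h) (hab h)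
    calc _ ≤ (√(∑' h, g h ^ 2) * √(∑' h, (a (k - h) * b h) ^ 2)) ^ 2 := by gcongr
      _ = _ := by
        rw [mul_pow, Real.sq_sqrt (tsum_nonneg fun _ => sq_nonneg _),
          Real.sq_sqrt (tsum_nonneg fun _ => sq_nonneg _)]
  have hS : ∀ k, Summable fun h => ‖F k h‖ := by
    intro k
    refine (summable_mul_left_iff (hw k).ne').1 ?_
    exact Summable.of_nonneg_of_le (fun h => mul_nonneg (hw k).le (norm_nonneg _)) (hF k) (hCS k).1
  refine ⟨hS, ?_⟩
  have hpt : ∀ k, (w k * ‖∑' h, F k h‖) ^ 2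
      ≤ (∑' h, g h ^ 2) * ∑' h, (a (k - h) * b h) ^ 2 := by
    intro k
    refine le_trans ?_ (hCS k).2
    refine pow_le_pow_left₀ (mul_nonneg (hw k).le (norm_nonneg _)) ?_ 2
    calc w k * ‖∑' h, F k h‖ ≤ w k * ∑' h, ‖F k h‖ :=
          mul_le_mul_of_nonneg_left (norm_tsum_le_tsum_norm (hS k)) (hw k).le
      _ = ∑' h, w k * ‖F k h‖ := tsum_mul_left.symm
      _ ≤ _ := ((hS k).mul_left _).tsum_le_tsum (hF k) (hCS k).1
  have hG : Summable fun k => (∑' h, g h ^ 2) * ∑' h, (a (k - h) * b h) ^ 2 :=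
    hshear.prod.mul_left _
  calc _ ≤ ∑' k, (∑' h, g h ^ 2) * ∑' h, (a (k - h) * b h) ^ 2 :=
        (Summable.of_nonneg_of_le (fun _ => sq_nonneg _) hpt hG).tsum_le_tsum hpt hG
    _ = _ := by rw [tsum_mul_left, htotal, mul_assoc]

lemma rpow_mul_sq {x : ℝ} (hx : 0 ≤ x) (p t : ℝ) : (x ^ p * t) ^ 2 = x ^ (2 * p) * t ^ 2 := by
  rw [mul_pow, ← Real.rpow_natCast, ← Real.rpow_mul hx, mul_comm p]; norm_num

/-- Fix `s ∈ (1/2, 1)`, `r > 1/2`, `n ∈ ℕ`. There is `c > 0` such that for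
all sequences `A` and `u` with finite `H^s`- resp. `H^r`-weighted `ℓ²`-norms, the series
`w(k) := ∑_h (|h|^{2(s−1)} h − |k|^{2(s−1)} k) A(k−h) u(h)` converges absolutely for
every `k` and `∑_k (1+|k|)^{2(1−s)} ‖w(k)‖² ≤ c² ‖A‖_s² ‖u‖_r²`; this is the Fourier
form of the commutator estimate `‖[A, Δ^{s−1} ∘ d/dt] u‖_{1−s} ≤ c ‖A‖_s ‖u‖_r`. -/
theorem stmt6 (s r : ℝ) (hs1 : 1 / 2 < s) (hs2 : s < 1) (hr : 1 / 2 < r) (n : ℕ) :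
    ∃ c : ℝ, 0 < c ∧ ∀ (A : ℤ → Matrix (Fin n) (Fin n) ℂ) (u : ℤ → (Fin n → ℂ)),
      Summable (fun k : ℤ => ((1 + |k| : ℤ) : ℝ) ^ (2 * s) * ‖A k‖ ^ 2) →
      Summable (fun h : ℤ => ((1 + |h| : ℤ) : ℝ) ^ (2 * r) * ‖u h‖ ^ 2) →
      (∀ k : ℤ, Summable (fun h : ℤ =>
        ‖(((|h| : ℤ) : ℝ) ^ (2 * (s - 1)) * (h : ℝ) - ((|k| : ℤ) : ℝ) ^ (2 * (s - 1)) * (k : ℝ)) •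
            (A (k - h)).mulVec (u h)‖)) ∧
      (∑' k : ℤ, ((1 + |k| : ℤ) : ℝ) ^ (2 * (1 - s)) *
        ‖∑' h : ℤ,
          (((|h| : ℤ) : ℝ) ^ (2 * (s - 1)) * (h : ℝ) - ((|k| : ℤ) : ℝ) ^ (2 * (s - 1)) * (k : ℝ)) •
            (A (k - h)).mulVec (u h)‖ ^ 2)
        ≤ c ^ 2 * (∑' k : ℤ, ((1 + |k| : ℤ) : ℝ) ^ (2 * s) * ‖A k‖ ^ 2)
            * (∑' h : ℤ, ((1 + |h| : ℤ) : ℝ) ^ (2 * r) * ‖u h‖ ^ 2) := by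
  have hpos : ∀ k : ℤ, 0 < ((1 + |k| : ℤ) : ℝ) := fun k => by
    have := abs_nonneg k
    exact_mod_cast (by linarith : 0 < 1 + |k|)
  have hg : Summable fun h : ℤ => (8 * ((1 + |h| : ℤ) : ℝ) ^ (-r)) ^ 2 := by
    simp only [mul_pow]
    exact (summable_one_add_abs_rpow hr).mul_left _
  have hG : 0 ≤ ∑' h : ℤ, (8 * ((1 + |h| : ℤ) : ℝ) ^ (-r)) ^ 2 := tsum_nonneg fun _ => sq_nonneg _
  -- `c²` is one more than the `ℓ²` mass of `8 ⟨h⟩^{-r}`, which makes positivity immediate.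
  refine ⟨√(∑' h : ℤ, (8 * ((1 + |h| : ℤ) : ℝ) ^ (-r)) ^ 2 + 1), Real.sqrt_pos.2 (by linarith), ?_⟩
  intro A u hA hu
  rw [Real.sq_sqrt (by linarith)]
  have key := convolution_bound
    (fun k h : ℤ => (((|h| : ℤ) : ℝ) ^ (2 * (s - 1)) * (h : ℝ)
      - ((|k| : ℤ) : ℝ) ^ (2 * (s - 1)) * (k : ℝ)) • (A (k - h)).mulVec (u h))
    (fun k => ((1 + |k| : ℤ) : ℝ) ^ (1 - s)) (fun h => 8 * ((1 + |h| : ℤ) : ℝ) ^ (-r))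
    (fun k => ((1 + |k| : ℤ) : ℝ) ^ s * ‖A k‖) (fun h => ((1 + |h| : ℤ) : ℝ) ^ r * ‖u h‖)
    (fun k => Real.rpow_pos_of_pos (hpos k) _)
    (fun k => mul_nonneg (by norm_num) (Real.rpow_nonneg (hpos k).le _))
    (fun k => mul_nonneg (Real.rpow_nonneg (hpos k).le _) (norm_nonneg _))
    (fun k => mul_nonneg (Real.rpow_nonneg (hpos k).le _) (norm_nonneg _))
    hg
    (by simpa only [rpow_mul_sq (hpos _).le] using hA)
    (by simpa only [rpow_mul_sq (hpos _).le] using hu)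
    (by
      intro k h
      have hcancel : ((1 + |h| : ℤ) : ℝ) ^ (-r) * ((1 + |h| : ℤ) : ℝ) ^ r = 1 := by
        rw [← Real.rpow_add (hpos h)]; simp
      have hmul : ‖(A (k - h)).mulVec (u h)‖ ≤ ‖A (k - h)‖ * ‖u h‖ :=
        Matrix.linfty_opNorm_mulVec _ _
      have hsym := symbol_bound hs1 hs2 k h
      rw [norm_smul, Real.norm_eq_abs, ← mul_assoc]
      calc _ ≤ (8 * ((1 + |k - h| : ℤ) : ℝ) ^ s) * (‖A (k - h)‖ * ‖u h‖) :=
            mul_le_mul hsym hmul (norm_nonneg _)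
              (mul_nonneg (by norm_num) (Real.rpow_nonneg (hpos _).le _))
        _ = (8 * ((1 + |k - h| : ℤ) : ℝ) ^ s) * (‖A (k - h)‖ * ‖u h‖)
            * (((1 + |h| : ℤ) : ℝ) ^ (-r) * ((1 + |h| : ℤ) : ℝ) ^ r) := by
              rw [hcancel, mul_one]
        _ = _ := by ring)
  simp only [rpow_mul_sq (hpos _).le] at key
  refine ⟨key.1, key.2.trans ?_⟩
  have hA0 : 0 ≤ ∑' k : ℤ, ((1 + |k| : ℤ) : ℝ) ^ (2 * s) * ‖A k‖ ^ 2 :=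
    tsum_nonneg fun k => mul_nonneg (Real.rpow_nonneg (hpos k).le _) (sq_nonneg _)
  have hu0 : 0 ≤ ∑' h : ℤ, ((1 + |h| : ℤ) : ℝ) ^ (2 * r) * ‖u h‖ ^ 2 :=
    tsum_nonneg fun k => mul_nonneg (Real.rpow_nonneg (hpos k).le _) (sq_nonneg _)
  gcongr
  linarith
end

section
/- Let E be a real Banach space, a < b real numbers, and 𝔘 a family of continuous curves u : [a,b] → E that is equibounded and equicontinuous. Let (μ_n) be a sequence of finite signed (Radon) measures on [a,b] such that ∫_{[a,b]} g dμ_n → 0 for every continuous function g : [a,b] → ℝ. Then ∫_{[a,b]} u dμ_n → 0 in E uniformly in u ∈ 𝔘; that is, sup_{u∈𝔘} ‖∫_{[a,b]} u dμ_n‖ → 0 as n → ∞. -/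
/-!
The difference of integrals defines continuous linear functionals `L n` on the Banach space of
continuous real functions on `[a, b]`. They tend to `0` pointwise, so by Banach–Steinhaus their
norms are bounded, and hence they tend to `0` uniformly on totally bounded sets
(`uniform_tendsto_zero`). The functions `f ∘ u` with `u ∈ 𝔘` and `f` in the unit ball of the dual
of `E` form such a set, by Arzelà–Ascoli. Finally `‖∫ u dμ_n‖` equals `L n (f ∘ u)` for a norming
functional `f`, by Hahn–Banach. Going through the dual makes it unnecessary to know that the two
parts of `μ_n` are mutually singular.
-/

open MeasureTheory Filter
open scoped BoundedContinuousFunction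

/-- The functional `g ↦ ∫ g dμ - ∫ g dν` on bounded continuous functions. -/
noncomputable def integralDiff {X : Type*} [TopologicalSpace X] [MeasurableSpace X]
    [OpensMeasurableSpace X] (μ ν : Measure X) [IsFiniteMeasure μ] [IsFiniteMeasure ν] :
    (X →ᵇ ℝ) →L[ℝ] ℝ :=
  LinearMap.mkContinuous
    { toFun := fun g => (∫ t, g t ∂μ) - ∫ t, g t ∂ν
      map_add' := fun g h => by
        have e1 := integral_add (g.integrable μ) (h.integrable μ)
        have e2 := integral_add (g.integrable ν) (h.integrable ν)
        simp only [BoundedContinuousFunction.coe_add, Pi.add_apply, e1, e2]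
        ring
      map_smul' := fun c g => by
        simp only [BoundedContinuousFunction.coe_smul, RingHom.id_apply, smul_eq_mul]
        rw [integral_const_mul, integral_const_mul]
        ring }
    (μ.real Set.univ + ν.real Set.univ)
    (fun g => by
      refine (norm_sub_le _ _).trans ?_
      rw [add_mul]
      exact add_le_add (g.norm_integral_le_mul_norm μ) (g.norm_integral_le_mul_norm ν))

/-- Pointwise null sequences of functionals on a Banach space are uniformly null on totally
bounded sets: by Banach–Steinhaus the norms are bounded, so a finite net suffices. -/
lemma uniform_tendsto_zero {F : Type*} [NormedAddCommGroup F] [NormedSpace ℝ F] [CompleteSpace F]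
    (L : ℕ → F →L[ℝ] ℝ) (hL : ∀ g, Tendsto (fun n => L n g) atTop (nhds 0))
    {K : Set F} (hK : TotallyBounded K) {ε : ℝ} (hε : 0 < ε) :
    ∃ N : ℕ, ∀ n ≥ N, ∀ g ∈ K, ‖L n g‖ ≤ ε := by
  obtain ⟨C, hC⟩ : ∃ C, ∀ n, ‖L n‖ ≤ C := by
    refine banach_steinhaus fun g => ?_
    obtain ⟨C, hC⟩ := (Metric.isBounded_range_of_tendsto _ (hL g)).exists_norm_le
    exact ⟨C, fun n => hC _ ⟨n, rfl⟩⟩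
  have hC0 : 0 ≤ C := (norm_nonneg _).trans (hC 0)
  obtain ⟨T, hT, hKT⟩ := Metric.totallyBounded_iff.1 hK (ε / (2 * (C + 1))) (by positivity)
  have hev : ∀ᶠ n in atTop, ∀ h ∈ T, ‖L n h‖ < ε / 2 :=
    (eventually_all_finite hT).2 fun h _ =>
      ((tendsto_zero_iff_norm_tendsto_zero.1 (hL h)).eventually (gt_mem_nhds (half_pos hε)))
  obtain ⟨N, hN⟩ := eventually_atTop.1 hev
  refine ⟨N, fun n hn g hg => ?_⟩
  obtain ⟨h, hh, hgh⟩ := Set.mem_iUnion₂.1 (hKT hg)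
  rw [Metric.mem_ball, dist_eq_norm] at hgh
  have h1 : ‖L n (g - h)‖ ≤ (C + 1) * (ε / (2 * (C + 1))) :=
    ((L n).le_opNorm _).trans
      (mul_le_mul ((hC n).trans (by linarith)) hgh.le (norm_nonneg _) (by linarith))
  have h2 : (C + 1) * (ε / (2 * (C + 1))) = ε / 2 := by field_simp
  have h3 : L n g = L n (g - h) + L n h := by simp
  rw [h3]
  linarith [norm_add_le (L n (g - h)) (L n h), hN n hn h hh]

/-- Let `E` be a real Banach space, `𝔘` an equibounded and equicontinuous
family of continuous curves `[a,b] → E`, and `(μ_n)` a sequence of finite signed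
measures on `[a,b]` (given via their Jordan decompositions `μ_n = μp n − μm n`) which
converges to zero against every continuous real function. Then `∫ u dμ_n → 0` in `E`
uniformly in `u ∈ 𝔘`. -/
theorem stmt9 {E : Type*} [NormedAddCommGroup E] [NormedSpace ℝ E] [CompleteSpace E]
    (a b : ℝ) (hab : a < b) (𝔘 : Set (Set.Icc a b → E))
    (hcont : ∀ u ∈ 𝔘, Continuous u)
    (M : ℝ) (hbound : ∀ u ∈ 𝔘, ∀ t : Set.Icc a b, ‖u t‖ ≤ M)
    (hequi : ∀ ε : ℝ, 0 < ε → ∃ δ : ℝ, 0 < δ ∧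
      ∀ u ∈ 𝔘, ∀ t t' : Set.Icc a b, dist t t' < δ → ‖u t - u t'‖ < ε)
    (μp μm : ℕ → Measure (Set.Icc a b))
    (hfin : ∀ n, IsFiniteMeasure (μp n) ∧ IsFiniteMeasure (μm n))
    (hweak : ∀ g : Set.Icc a b → ℝ, Continuous g →
      Tendsto (fun n => (∫ t, g t ∂(μp n)) - ∫ t, g t ∂(μm n)) atTop (nhds 0)) :
    ∀ ε : ℝ, 0 < ε → ∃ N : ℕ, ∀ n ≥ N, ∀ u ∈ 𝔘,
      ‖(∫ t, u t ∂(μp n)) - ∫ t, u t ∂(μm n)‖ ≤ ε := by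
  intro ε hε
  have := fun n => (hfin n).1
  have := fun n => (hfin n).2
  let L : ℕ → (Set.Icc a b →ᵇ ℝ) →L[ℝ] ℝ := fun n => integralDiff (μp n) (μm n)
  have hL : ∀ g, Tendsto (fun n => L n g) atTop (nhds 0) := fun g => hweak g g.continuous
  let K : Set (Set.Icc a b →ᵇ ℝ) :=
    {g | ∃ u ∈ 𝔘, ∃ f : E →L[ℝ] ℝ, ‖f‖ ≤ 1 ∧ ∀ t, g t = f (u t)}
  have hf_le : ∀ f : E →L[ℝ] ℝ, ‖f‖ ≤ 1 → ∀ x, ‖f x‖ ≤ ‖x‖ := fun f hf x => by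
    simpa using f.le_of_opNorm_le hf x
  have hK : TotallyBounded K := by
    refine TotallyBounded.subset subset_closure (IsCompact.totallyBounded ?_)
    refine BoundedContinuousFunction.arzela_ascoli (Metric.closedBall (0 : ℝ) M)
      (isCompact_closedBall 0 M) K ?_ ?_
    · rintro g t ⟨u, hu, f, hf, hg⟩
      rw [mem_closedBall_zero_iff, hg]
      exact (hf_le f hf _).trans (hbound u hu t)
    · refine UniformEquicontinuous.equicontinuous (Metric.uniformEquicontinuous_iff.2 ?_)
      intro η hη
      obtain ⟨δ, hδ, h⟩ := hequi η hη
      refine ⟨δ, hδ, ?_⟩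
      rintro t t' htt' ⟨g, u, hu, f, hf, hg⟩
      simp only [dist_eq_norm, hg, ← map_sub]
      exact (hf_le f hf _).trans_lt (h u hu t t' htt')
  obtain ⟨N, hN⟩ := uniform_tendsto_zero L hL hK hε
  refine ⟨N, fun n hn u hu => ?_⟩
  obtain ⟨f, hf, hfx⟩ := exists_dual_vector'' ℝ ((∫ t, u t ∂(μp n)) - ∫ t, u t ∂(μm n))
  let g : Set.Icc a b →ᵇ ℝ :=
    BoundedContinuousFunction.mkOfCompact ⟨fun t => f (u t), f.continuous.comp (hcont u hu)⟩
  have hint : ∀ (ν : Measure (Set.Icc a b)) [IsFiniteMeasure ν], Integrable u ν := fun ν _ =>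
    (hcont u hu).integrable_of_hasCompactSupport (HasCompactSupport.of_compactSpace u)
  have hLg : L n g = f ((∫ t, u t ∂(μp n)) - ∫ t, u t ∂(μm n)) := by
    rw [map_sub, ← f.integral_comp_comm (hint (μp n)), ← f.integral_comp_comm (hint (μm n))]
    rfl
  have hle := hN n hn g ⟨u, hu, f, hf, fun _ => rfl⟩
  rw [hLg, hfx] at hle
  simpa using hle
end

section
/- Let E be a real Banach space, a < b real numbers, and 𝔘 a family of continuous curves u : [a,b] → E that is equibounded and equicontinuous. For n ≥ 1 set J_n := ⋃_{k∈ℤ} [2k/n, (2k+1)/n). Then ∫_a^b (𝟙_{J_n}(s) − 1/2) u(s) ds → 0 in E uniformly in u ∈ 𝔘; that is, sup_{u∈𝔘} ‖∫_a^b (𝟙_{J_n}(s) − 1/2) u(s) ds‖ → 0 as n → ∞. -/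
/-!
The weight `φ = 𝟙_{J_n} - 1/2` takes the values `±1/2` and changes sign under the shift by
`h = 1/n` (`weight_shift`). Writing `I = ∫_a^b φ u`, translation by `h` gives
`2 I = ∫_a^{b-h} φ(s) (u(s) - u(s+h)) ds + ∫_a^{a+h} φ u + ∫_{b-h}^b φ u`.
The first term is small by equicontinuity, and the two boundary terms are `O(h)` by
equiboundedness, both uniformly in `u`.
-/

open MeasureTheory

/-- The set `J_n = ⋃_{k∈ℤ} [2k/n, (2k+1)/n)`. -/
def homogJ (n : ℕ) : Set ℝ :=
  {t : ℝ | ∃ k : ℤ, (2 * k : ℝ) / n ≤ t ∧ t < (2 * k + 1 : ℝ) / n}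

lemma mem_homogJ_iff {n : ℕ} (hn : 0 < n) (t : ℝ) : t ∈ homogJ n ↔ Even ⌊(n : ℝ) * t⌋ := by
  have hn' : (0 : ℝ) < n := by exact_mod_cast hn
  constructor
  · rintro ⟨k, h1, h2⟩
    rw [div_le_iff₀ hn'] at h1
    rw [lt_div_iff₀ hn'] at h2
    have : ⌊(n : ℝ) * t⌋ = 2 * k := by
      rw [Int.floor_eq_iff]
      push_cast
      constructor <;> linarith
    rw [this]
    exact even_two_mul k
  · intro h
    obtain ⟨k, hk⟩ := h.exists_two_nsmul
    rw [Int.floor_eq_iff] at hk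
    simp only [nsmul_eq_mul, Nat.cast_ofNat] at hk
    refine ⟨k, ?_, ?_⟩
    · rw [div_le_iff₀ hn']
      push_cast at hk
      linarith [hk.1]
    · rw [lt_div_iff₀ hn']
      push_cast at hk
      linarith [hk.2]

lemma measurableSet_homogJ {n : ℕ} (hn : 0 < n) : MeasurableSet (homogJ n) := by
  have : homogJ n = (fun t : ℝ => ⌊(n : ℝ) * t⌋) ⁻¹' {k | Even k} := by
    ext t
    exact mem_homogJ_iff hn t
  rw [this]
  exact (Int.measurable_floor.comp (measurable_const_mul (n : ℝ))) (MeasurableSet.of_discrete)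

lemma weight_shift {n : ℕ} (hn : 0 < n) (t : ℝ) :
    (homogJ n).indicator (fun _ => (1 : ℝ)) (t + 1 / n) - 1 / 2
      = -((homogJ n).indicator (fun _ => (1 : ℝ)) t - 1 / 2) := by
  have hn' : (n : ℝ) ≠ 0 := by exact_mod_cast hn.ne'
  have key : t + 1 / n ∈ homogJ n ↔ t ∉ homogJ n := by
    rw [mem_homogJ_iff hn, mem_homogJ_iff hn]
    have : (n : ℝ) * (t + 1 / n) = n * t + 1 := by field_simp
    rw [this, Int.floor_add_one, Int.even_add_one]
  by_cases h : t ∈ homogJ n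
  · have h2 : t + 1 / n ∉ homogJ n := fun h' => key.1 h' h
    rw [Set.indicator_of_mem h, Set.indicator_of_notMem h2]
    norm_num
  · rw [Set.indicator_of_notMem h, Set.indicator_of_mem (key.2 h)]
    norm_num

lemma abs_weight_le (n : ℕ) (t : ℝ) :
    |(homogJ n).indicator (fun _ => (1 : ℝ)) t - 1 / 2| ≤ 1 / 2 := by
  by_cases h : t ∈ homogJ n
  · rw [Set.indicator_of_mem h, abs_le]
    norm_num
  · rw [Set.indicator_of_notMem h, abs_le]
    norm_num

/-- The quantitative estimate behind the theorem, for one curve and any weight `φ` bounded by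
`1/2` that is antiperiodic with antiperiod `h`: the constant `η` controls the increments of `u`
over steps of length `h`. -/
lemma norm_integral_antiperiodic_le {E : Type*} [NormedAddCommGroup E] [NormedSpace ℝ E]
    {a b h M η : ℝ} (h0 : 0 < h) (hle : h ≤ b - a) {φ : ℝ → ℝ} (hφm : Measurable φ)
    (hφ : ∀ t, |φ t| ≤ 1 / 2) (hshift : ∀ t, φ (t + h) = -φ t) {u : ℝ → E}
    (hu : ContinuousOn u (Set.Icc a b)) (hM : ∀ t ∈ Set.Icc a b, ‖u t‖ ≤ M)
    (hη : ∀ t ∈ Set.Icc a b, t + h ∈ Set.Icc a b → ‖u t - u (t + h)‖ ≤ η) :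
    2 * ‖∫ s in a..b, φ s • u s‖ ≤ η / 2 * (b - h - a) + M * h := by
  have hab : a ≤ b := by linarith
  have hI : IntervalIntegrable (fun s => φ s • u s) volume a b := by
    rw [intervalIntegrable_iff_integrableOn_Icc_of_le hab]
    refine Integrable.bdd_smul hu.integrableOn_Icc (1 / 2)
      hφm.aestronglyMeasurable (Filter.Eventually.of_forall fun t => hφ t)
  have sub : ∀ c d, a ≤ c → c ≤ d → d ≤ b →
      IntervalIntegrable (fun s => φ s • u s) volume c d := by
    intro c d h1 h2 h3
    apply hI.mono_set
    rw [Set.uIcc_of_le h2, Set.uIcc_of_le hab]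
    exact Set.Icc_subset_Icc h1 h3
  have i1 := sub a (b - h) le_rfl (by linarith) (by linarith)
  have i2 := sub (b - h) b (by linarith) (by linarith) le_rfl
  have i3 := sub a (a + h) le_rfl (by linarith) (by linarith)
  have i4 := sub (a + h) b (by linarith) (by linarith) le_rfl
  have i5 : IntervalIntegrable (fun s => φ (s + h) • u (s + h)) volume a (b - h) := by
    have := i4.comp_add_right h
    simpa using this
  have e1 : (∫ s in a..(b - h), φ (s + h) • u (s + h)) = ∫ s in (a + h)..b, φ s • u s := by
    rw [intervalIntegral.integral_comp_add_right (fun s => φ s • u s) h, sub_add_cancel]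
  have e2 : (∫ s in a..(b - h), φ s • (u s - u (s + h)))
      = (∫ s in a..(b - h), φ s • u s) + ∫ s in (a + h)..b, φ s • u s := by
    rw [← e1, ← intervalIntegral.integral_add i1 i5]
    refine intervalIntegral.integral_congr fun s _ => ?_
    simp only [hshift, smul_add, smul_neg, neg_smul, sub_eq_add_neg]
  have e3 : (2 : ℝ) • (∫ s in a..b, φ s • u s)
      = (∫ s in a..(b - h), φ s • (u s - u (s + h)))
        + (∫ s in a..(a + h), φ s • u s) + ∫ s in (b - h)..b, φ s • u s := by
    rw [e2, two_smul]
    nth_rewrite 1 [← intervalIntegral.integral_add_adjacent_intervals i1 i2]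
    rw [← intervalIntegral.integral_add_adjacent_intervals i3 i4]
    abel
  have bd : ∀ c d, a ≤ c → c ≤ d → d ≤ b →
      ‖∫ s in c..d, φ s • u s‖ ≤ M / 2 * (d - c) := by
    intro c d h1 h2 h3
    rw [← abs_of_nonneg (sub_nonneg.2 h2)]
    refine intervalIntegral.norm_integral_le_of_norm_le_const fun t ht => ?_
    rw [Set.uIoc_of_le h2] at ht
    rw [norm_smul, Real.norm_eq_abs]
    have := mul_le_mul (hφ t) (hM t ⟨by linarith [ht.1], by linarith [ht.2]⟩)
      (norm_nonneg _) (by norm_num)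
    linarith
  have b1 := bd a (a + h) le_rfl (by linarith) (by linarith)
  have b2 := bd (b - h) b (by linarith) (by linarith) le_rfl
  have b3 : ‖∫ s in a..(b - h), φ s • (u s - u (s + h))‖ ≤ η / 2 * (b - h - a) := by
    have h2 : a ≤ b - h := by linarith
    rw [← abs_of_nonneg (sub_nonneg.2 h2)]
    refine intervalIntegral.norm_integral_le_of_norm_le_const fun t ht => ?_
    rw [Set.uIoc_of_le h2] at ht
    rw [norm_smul, Real.norm_eq_abs]
    have := mul_le_mul (hφ t) (hη t ⟨by linarith [ht.1], by linarith [ht.2]⟩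
      ⟨by linarith [ht.1], by linarith [ht.2]⟩) (norm_nonneg _) (by norm_num)
    linarith
  calc 2 * ‖∫ s in a..b, φ s • u s‖ = ‖(2 : ℝ) • ∫ s in a..b, φ s • u s‖ := by
        rw [norm_smul]; norm_num
    _ ≤ _ := by
        rw [e3]
        refine (norm_add₃_le).trans ?_
        linarith

/-- Let `E` be a real Banach space and `𝔘` an equibounded and
equicontinuous family of continuous curves `[a,b] → E`. Then
`∫_a^b (𝟙_{J_n}(s) − 1/2) u(s) ds → 0` in `E` uniformly in `u ∈ 𝔘`. -/
theorem stmt10 {E : Type*} [NormedAddCommGroup E] [NormedSpace ℝ E] [CompleteSpace E]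
    (a b : ℝ) (hab : a < b) (𝔘 : Set (ℝ → E))
    (hcont : ∀ u ∈ 𝔘, ContinuousOn u (Set.Icc a b))
    (M : ℝ) (hbound : ∀ u ∈ 𝔘, ∀ t ∈ Set.Icc a b, ‖u t‖ ≤ M)
    (hequi : ∀ ε : ℝ, 0 < ε → ∃ δ : ℝ, 0 < δ ∧ ∀ u ∈ 𝔘,
      ∀ t ∈ Set.Icc a b, ∀ t' ∈ Set.Icc a b, |t - t'| < δ → ‖u t - u t'‖ < ε) :
    ∀ ε : ℝ, 0 < ε → ∃ N : ℕ, ∀ n ≥ N, ∀ u ∈ 𝔘,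
      ‖∫ s in a..b, ((homogJ n).indicator (fun _ => (1:ℝ)) s - 1/2) • u s‖ ≤ ε := by
  intro ε hε
  have hba : 0 < b - a := sub_pos.2 hab
  obtain ⟨δ, hδ, hδu⟩ := hequi (ε / (b - a)) (by positivity)
  -- `|M|` rather than `M`: the bound may be negative when the family is empty.
  have hMpos : 0 < |M| + 1 := by positivity
  obtain ⟨N, hN⟩ := exists_nat_one_div_lt
    (show 0 < min δ (min (b - a) (ε / (|M| + 1))) by positivity)
  refine ⟨N + 1, fun n hn u hu => ?_⟩
  have hn0 : 0 < n := by omega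
  have hh0 : (0 : ℝ) < 1 / n := by positivity
  have hh : (1 : ℝ) / n ≤ 1 / ((N : ℝ) + 1) := by
    apply one_div_le_one_div_of_le (by positivity)
    exact_mod_cast hn
  have hlt := hh.trans_lt hN
  rw [lt_min_iff, lt_min_iff] at hlt
  obtain ⟨h1, h2, h3⟩ := hlt
  have main := norm_integral_antiperiodic_le (η := ε / (b - a)) hh0 h2.le
    (φ := fun t => (homogJ n).indicator (fun _ => (1 : ℝ)) t - 1 / 2)
    ((measurable_const.indicator (measurableSet_homogJ hn0)).sub_const _)
    (abs_weight_le n) (weight_shift hn0) (hcont u hu) (hbound u hu)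
    (fun t ht ht' => (hδu u hu t ht _ ht' (by
      rw [sub_add_cancel_left, abs_neg, abs_of_pos hh0]
      exact h1)).le)
  have q1 : ε / (b - a) / 2 * (b - 1 / n - a) ≤ ε / 2 := by
    calc ε / (b - a) / 2 * (b - 1 / n - a) ≤ ε / (b - a) / 2 * (b - a) := by
          gcongr
          linarith
      _ = ε / 2 := by field_simp
  have q2 : M * (1 / n) ≤ ε := by
    rw [lt_div_iff₀ hMpos] at h3
    nlinarith [le_abs_self M]
  linarith
end

section
/- Let E, F, G be Banach spaces and let A : E → F, B : E → G be bounded linear operators admitting bounded linear right inverses (i.e., there exist bounded R : F → E with A∘R = id_F and bounded S : G → E with B∘S = id_G). Then the restriction A|_{ker B} admits a bounded linear right inverse with values in ker B (i.e., there exists bounded R₀ : F → E with range(R₀) ⊆ ker B and A∘R₀ = id_F) if and only if the restriction B|_{ker A} admits a bounded linear right inverse with values in ker A (i.e., there exists bounded S₀ : G → E with range(S₀) ⊆ ker A and B∘S₀ = id_G). -/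
/-- Let `E, F, G` be Banach spaces and `A : E → F`, `B : E → G` bounded
linear operators admitting bounded linear right inverses. Then `A|_{ker B}` admits a
bounded linear right inverse with values in `ker B` if and only if `B|_{ker A}` admits
a bounded linear right inverse with values in `ker A`. -/
theorem stmt12 {E F G : Type*}
    [NormedAddCommGroup E] [NormedSpace ℝ E] [CompleteSpace E]
    [NormedAddCommGroup F] [NormedSpace ℝ F] [CompleteSpace F]
    [NormedAddCommGroup G] [NormedSpace ℝ G] [CompleteSpace G]
    (A : E →L[ℝ] F) (B : E →L[ℝ] G)
    (hA : ∃ R : F →L[ℝ] E, ∀ f : F, A (R f) = f)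
    (hB : ∃ S : G →L[ℝ] E, ∀ g : G, B (S g) = g) :
    (∃ R₀ : F →L[ℝ] E, (∀ f : F, B (R₀ f) = 0) ∧ ∀ f : F, A (R₀ f) = f) ↔
    (∃ S₀ : G →L[ℝ] E, (∀ g : G, A (S₀ g) = 0) ∧ ∀ g : G, B (S₀ g) = g) := by
  obtain ⟨R, hR⟩ := hA
  obtain ⟨S, hS⟩ := hB
  constructor
  -- Correct `S` by subtracting the part of it that `A` sees, lifted into `ker B` by `R₀`.
  · rintro ⟨R₀, hB₀, hA₀⟩
    exact ⟨S - R₀ ∘L A ∘L S, fun g => by simp [hA₀], fun g => by simp [hB₀, hS]⟩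
  · rintro ⟨S₀, hA₀, hB₀⟩
    exact ⟨R - S₀ ∘L B ∘L R, fun f => by simp [hB₀], fun f => by simp [hA₀, hR]⟩
end

section
/- Let X and Y be normed (Banach) spaces, U ⊆ X an open neighborhood of a point x₀, and f : U → Y a map that is Fréchet differentiable at x₀ with derivative D := Df(x₀). If the image f(U) is totally bounded (relatively compact) in Y, then D is a compact operator, i.e., the image of the closed unit ball of X under D is totally bounded in Y. -/
/-! For small `r > 0`, differentiability makes the difference quotient
`r⁻¹ • (f (x₀ + r • v) - f x₀)` uniformly `ε / 2`-close to `D v` for `‖v‖ ≤ 1`. These quotients lie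
in an affine image of `f '' U`, which is totally bounded, so a finite `ε / 2`-net of that image is a
finite `ε`-net of the image of the unit ball under `D`. -/

/-- Let `X, Y` be normed spaces, `U ⊆ X` an open neighborhood of `x₀`,
and `f : U → Y` Fréchet differentiable at `x₀` with derivative `D`. If `f(U)` is
totally bounded, then `D` is a compact operator: the image of the closed unit ball
under `D` is totally bounded. -/
theorem stmt16 {X Y : Type*} [NormedAddCommGroup X] [NormedSpace ℝ X]
    [NormedAddCommGroup Y] [NormedSpace ℝ Y]
    (U : Set X) (hU : IsOpen U) (x₀ : X) (hx₀ : x₀ ∈ U)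
    (f : X → Y) (D : X →L[ℝ] Y) (hf : HasFDerivAt f D x₀)
    (hfU : TotallyBounded (f '' U)) :
    TotallyBounded (D '' Metric.closedBall 0 1) := by
  rw [Metric.totallyBounded_iff]
  intro ε hε
  have hclose := (hf.isLittleO.def (half_pos hε)).and (hU.mem_nhds hx₀)
  obtain ⟨δ, hδ, hball⟩ := Metric.eventually_nhds_iff.1 hclose
  obtain ⟨r, hr, hrδ⟩ := exists_between hδ
  have hquot : UniformContinuous (fun y : Y => r⁻¹ • (y - f x₀)) :=
    (uniformContinuous_id.sub uniformContinuous_const).const_smul r⁻¹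
  obtain ⟨t, ht, hnet⟩ := Metric.totallyBounded_iff.1 (hfU.image hquot) (ε / 2) (half_pos hε)
  refine ⟨t, ht, ?_⟩
  rintro _ ⟨v, hv, rfl⟩
  have hv1 : ‖v‖ ≤ 1 := by simpa using hv
  have hrv : ‖r • v‖ ≤ r := by
    rw [norm_smul, Real.norm_of_nonneg hr.le]
    exact mul_le_of_le_one_right hr.le hv1
  obtain ⟨hlin, hmem⟩ := hball (y := x₀ + r • v) (by simpa using hrv.trans_lt hrδ)
  rw [add_sub_cancel_left] at hlin
  obtain ⟨c, hc, hdist⟩ := Set.mem_iUnion₂.1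
    (hnet (Set.mem_image_of_mem _ (Set.mem_image_of_mem f hmem)))
  refine Set.mem_iUnion₂.2 ⟨c, hc, ?_⟩
  have hD : dist (D v) (r⁻¹ • (f (x₀ + r • v) - f x₀)) ≤ ε / 2 := by
    have heq : r⁻¹ • (f (x₀ + r • v) - f x₀) - D v
        = r⁻¹ • (f (x₀ + r • v) - f x₀ - D (r • v)) := by
      rw [smul_sub r⁻¹ _ (D (r • v)), map_smul, inv_smul_smul₀ hr.ne']
    rw [dist_comm, dist_eq_norm, heq, norm_smul, norm_inv, Real.norm_of_nonneg hr.le,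
      inv_mul_le_iff₀ hr, mul_comm r]
    exact hlin.trans (mul_le_mul_of_nonneg_left hrv (half_pos hε).le)
  rw [Metric.mem_ball] at hdist ⊢
  linarith [dist_triangle (D v) (r⁻¹ • (f (x₀ + r • v) - f x₀)) c]
end

section
/- Let s ∈ [1/2, 1) and let h, k be real numbers with 0 ≤ h ≤ k. Then k^{1−s} (k^{2s−1} − h^{2s−1}) ≤ (k − h)^s. -/
/-- For `s ∈ [1/2, 1)` and real numbers `0 ≤ h ≤ k`,
`k^{1−s} (k^{2s−1} − h^{2s−1}) ≤ (k − h)^s` (real powers, with the `rpow` conventions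
`0^0 = 1` and `0^t = 0` for `t > 0`). -/
theorem stmt17 (s h k : ℝ) (hs1 : 1 / 2 ≤ s) (hs2 : s < 1) (hh : 0 ≤ h) (hk : h ≤ k) :
    k ^ (1 - s) * (k ^ (2 * s - 1) - h ^ (2 * s - 1)) ≤ (k - h) ^ s := by
  -- Both exponents are nonnegative, so the splitting also holds at base `0`.
  have hsplit : ∀ x : ℝ, 0 ≤ x → x ^ (1 - s) * x ^ (2 * s - 1) = x ^ s := fun x hx => by
    rw [← Real.rpow_add_of_nonneg hx (by linarith) (by linarith)]
    congr 1
    ring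
  have hmono : h ^ s ≤ k ^ (1 - s) * h ^ (2 * s - 1) := by
    rw [← hsplit h hh]
    exact mul_le_mul_of_nonneg_right (Real.rpow_le_rpow hh hk (by linarith))
      (Real.rpow_nonneg hh _)
  have hsub : k ^ s ≤ (k - h) ^ s + h ^ s := by
    simpa using Real.rpow_add_le_add_rpow (sub_nonneg.2 hk) hh
      (by linarith : (0 : ℝ) ≤ s) hs2.le
  rw [mul_sub, hsplit k (hh.trans hk)]
  linarith
end
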